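/- arXiv:2104.05907 — 4 statements merged into one kernel-verified Lean document; each statement's English description precedes it below -/
import Mathlib

section
/- For every positive integer k, the k-th Burling graph contains no induced wheel (i.e., no induced subgraph of the k-th Burling graph is a wheel). -/
universe u

/-- A *wheel* is a graph consisting of an induced cycle of length at least 4 together with a
single additional vertex (the hub) having at least 3 neighbours on the cycle. -/
def IsWheel {V : Type u} (G : SimpleGraph V) : Prop :=
  ∃ (w : V) (n : ℕ), 4 ≤ n ∧
    Nonempty (G.induce {u | u ≠ w} ≃g SimpleGraph.cycleGraph n) ∧
    3 ≤ (G.neighborSet w).ncard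

/-- A graph is a *fan with pivot `f`* if deleting `f` leaves an induced path and `f` has at
least 3 neighbours (necessarily on that path). -/
def IsFanWithPivot {V : Type u} (G : SimpleGraph V) (f : V) : Prop :=
  (∃ n : ℕ, Nonempty (G.induce {u | u ≠ f} ≃g SimpleGraph.pathGraph n)) ∧
    3 ≤ (G.neighborSet f).ncard

/-- A *fan* is a graph consisting of an induced path and a single additional vertex (the pivot)
with at least 3 neighbours on the path. -/
def IsFan {V : Type u} (G : SimpleGraph V) : Prop :=
  ∃ f : V, IsFanWithPivot G f

/-- A *guarded fan* is a graft `(F, M)` such that `F` is a fan with pivot `f` and both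
endpoints of the path `F \ {f}` lie in `M`. -/
def IsGuardedFan {V : Type u} (G : SimpleGraph V) (M : Set V) : Prop :=
  ∃ (f : V) (n : ℕ) (e : G.induce {u | u ≠ f} ≃g SimpleGraph.pathGraph (n + 1)),
    3 ≤ (G.neighborSet f).ncard ∧
    ((e.symm 0 : {u // u ≠ f}) : V) ∈ M ∧ ((e.symm (Fin.last n) : {u // u ≠ f}) : V) ∈ M

/-- A *mountable path* is a graft `(P, M)` such that `P` is a path and `|M| ≥ 3`. -/
def IsMountablePath {V : Type u} (G : SimpleGraph V) (M : Set V) : Prop :=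
  (∃ n : ℕ, Nonempty (G ≃g SimpleGraph.pathGraph n)) ∧ 3 ≤ M.ncard

/-- A *theta* is a graph consisting of three internally vertex-disjoint paths of length at
least 2 with common endpoints, such that every edge lies on one of the three paths. -/
def IsTheta {V : Type u} (G : SimpleGraph V) : Prop :=
  ∃ (a b : V) (p₁ p₂ p₃ : G.Walk a b),
    a ≠ b ∧ p₁.IsPath ∧ p₂.IsPath ∧ p₃.IsPath ∧
    2 ≤ p₁.length ∧ 2 ≤ p₂.length ∧ 2 ≤ p₃.length ∧
    (∀ v, v ∈ p₁.support → v ∈ p₂.support → v = a ∨ v = b) ∧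
    (∀ v, v ∈ p₁.support → v ∈ p₃.support → v = a ∨ v = b) ∧
    (∀ v, v ∈ p₂.support → v ∈ p₃.support → v = a ∨ v = b) ∧
    (∀ v : V, v ∈ p₁.support ∨ v ∈ p₂.support ∨ v ∈ p₃.support) ∧
    (∀ e ∈ G.edgeSet, e ∈ p₁.edges ∨ e ∈ p₂.edges ∨ e ∈ p₃.edges)

/-- A graft `(G, T)` is *clean* if (1) `G` is triangle-free, (2) `T` is a stable set,
(3) `G` contains no induced wheel, (4) `(G,T)` contains no induced guarded fan, and
(5) `(G,T)` contains no induced mountable path. -/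
def IsCleanGraft {V : Type u} (G : SimpleGraph V) (T : Set V) : Prop :=
  G.CliqueFree 3 ∧
  (∀ u ∈ T, ∀ v ∈ T, ¬ G.Adj u v) ∧
  (∀ s : Set V, ¬ IsWheel (G.induce s)) ∧
  (∀ s : Set V, ¬ IsGuardedFan (G.induce s) (Subtype.val ⁻¹' T)) ∧
  (∀ s : Set V, ¬ IsMountablePath (G.induce s) (Subtype.val ⁻¹' T))

/-- The graph of `pendent((G,T),t)`: a new vertex (`none`) is added whose only
neighbour is `t`. -/
def pendentGraph {V : Type u} (G : SimpleGraph V) (t : V) : SimpleGraph (Option V) :=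
  SimpleGraph.fromRel (fun a b =>
    (∃ u v : V, a = some u ∧ b = some v ∧ G.Adj u v) ∨ (a = none ∧ b = some t))

/-- The distinguished set of `pendent((G,T),t)`: `T' = (T ∪ {t'}) \ {t}`. -/
def pendentT {V : Type u} (T : Set V) (t : V) : Set (Option V) :=
  insert none (some '' (T \ {t}))

/-- The graph of `clone((G,T),t)`: a new vertex (`none`) is added whose neighbourhood is
exactly the neighbourhood of `t` in `G`. -/
def cloneGraph {V : Type u} (G : SimpleGraph V) (t : V) : SimpleGraph (Option V) :=
  SimpleGraph.fromRel (fun a b =>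
    (∃ u v : V, a = some u ∧ b = some v ∧ G.Adj u v) ∨
    (∃ v : V, a = none ∧ b = some v ∧ G.Adj t v))

/-- The distinguished set of `clone((G,T),t)`: `T' = T ∪ {t'}`. -/
def cloneT {V : Type u} (T : Set V) : Set (Option V) :=
  insert none (some '' T)

/-- The graph of `join((G₁,T₁), X, (G₂,T₂))`, where the bijection `φ : X ≃ T₂` prescribes
which vertex of `T₂` is identified with which vertex of `X`. -/
def joinGraph {V₁ V₂ : Type u} (G₁ : SimpleGraph V₁) (G₂ : SimpleGraph V₂)
    (X : Set V₁) (T₂ : Set V₂) (φ : X ≃ T₂) :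
    SimpleGraph (V₁ ⊕ {v : V₂ // v ∉ T₂}) :=
  SimpleGraph.fromRel (fun a b =>
    (∃ u v : V₁, a = Sum.inl u ∧ b = Sum.inl v ∧ G₁.Adj u v) ∨
    (∃ u v : {v : V₂ // v ∉ T₂}, a = Sum.inr u ∧ b = Sum.inr v ∧ G₂.Adj ↑u ↑v) ∨
    (∃ (x : X) (w : {v : V₂ // v ∉ T₂}), a = Sum.inl ↑x ∧ b = Sum.inr w ∧ G₂.Adj ↑(φ x) ↑w) ∨
    (∃ x y : X, a = Sum.inl ↑x ∧ b = Sum.inl ↑y ∧ G₂.Adj ↑(φ x) ↑(φ y)))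

/-- The distinguished set of `join((G₁,T₁), X, (G₂,T₂))` is `T₁`. -/
def joinT {V₁ V₂ : Type u} (T₁ : Set V₁) (T₂ : Set V₂) : Set (V₁ ⊕ {v : V₂ // v ∉ T₂}) :=
  Sum.inl '' T₁

/-- A *graph–stable-set pair*: a graph together with a set of (stable) sets of vertices. -/
structure GSPair : Type 1 where
  V : Type
  G : SimpleGraph V
  S : Set (Set V)

/-- The `NEXT` procedure of the Burling construction.  The new vertex type consists of the
original vertices, the vertices `(S, u)` of the copy `H_S` for each `S ∈ 𝒮`, and the new
vertices `v_{S,T}` for `S ∈ 𝒮` and `T ∈ 𝒮(H_S)`. -/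
def NEXT (P : GSPair) : GSPair where
  V := P.V ⊕ ((↥P.S × P.V) ⊕ (↥P.S × ↥P.S))
  G := SimpleGraph.fromRel (fun a b =>
    (∃ u v : P.V, a = Sum.inl u ∧ b = Sum.inl v ∧ P.G.Adj u v) ∨
    (∃ (S : ↥P.S) (u v : P.V),
      a = Sum.inr (Sum.inl (S, u)) ∧ b = Sum.inr (Sum.inl (S, v)) ∧ P.G.Adj u v) ∨
    (∃ (S T : ↥P.S) (u : P.V),
      a = Sum.inr (Sum.inr (S, T)) ∧ b = Sum.inr (Sum.inl (S, u)) ∧ u ∈ (T : Set P.V)))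
  S := { A | ∃ S T : ↥P.S,
      A = Sum.inl '' (S : Set P.V) ∪ (fun u => Sum.inr (Sum.inl (S, u))) '' (T : Set P.V) ∨
      A = insert (Sum.inr (Sum.inr (S, T))) (Sum.inl '' (S : Set P.V)) }

/-- `BurlingPair k` is the graph–stable-set pair `(G'_{k+1}, 𝒮_{k+1})`; in particular
`BurlingPair 0 = (K₁, {V(K₁)})` and `(BurlingPair (k-1)).G` is the `k`-th Burling graph. -/
def BurlingPair : ℕ → GSPair
  | 0 => ⟨Unit, ⊥, {Set.univ}⟩
  | (k + 1) => NEXT (BurlingPair k)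

/-- A *graft*: a graph together with a distinguished set of vertices. -/
structure GraftData : Type 1 where
  V : Type
  G : SimpleGraph V
  T : Set V

/-- The step `(G_k, T_k) ↦ (G_{k+1}, T_{k+1})` of the graft construction of Burling graphs,
with all the pendent, clone and join operations of the construction performed at once.

Vertices: `inl x` for `x ∈ V(G_k)`; `inr (inl ⟨u, w⟩)` for `u ∈ T_k` and
`w : ↥T_k ⊕ ↥T_k` with `w ≠ inl u`, the `2|T_k| - 1` clones of `u` (so that
`X_u = {u} ∪ {⟨u, w⟩}` has been identified with `S'_u ≃ T_k ⊕ T_k`, the vertex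
indexed by `inl v` being the copy of `v` in `S_u` and the vertex indexed by `inr v`
being the pendant `t_{u,v}`); and `inr (inr (u, y))` for the vertices of the copy
`H'_u` not in `S'_u`, namely `y = inl x` for a copy of `x ∈ V(G_k) \ T_k` and
`y = inr v` for the clone `v_u` of `v ∈ T_k`. -/
def nextGraft (P : GraftData) : GraftData where
  V := P.V ⊕ ((Σ u : ↥P.T, {w : ↥P.T ⊕ ↥P.T // w ≠ Sum.inl u}) ⊕
        (↥P.T × ({v : P.V // v ∉ P.T} ⊕ ↥P.T)))
  G := SimpleGraph.fromRel (fun a b =>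
    -- edges of `G_k`
    (∃ x y : P.V, a = Sum.inl x ∧ b = Sum.inl y ∧ P.G.Adj x y) ∨
    -- each clone of `u` is adjacent to `N_{G_k}(u)`
    (∃ (x : P.V) (u : ↥P.T) (w : {w : ↥P.T ⊕ ↥P.T // w ≠ Sum.inl u}),
      a = Sum.inl x ∧ b = Sum.inr (Sum.inl ⟨u, w⟩) ∧ P.G.Adj ↑u x) ∨
    -- `u` (identified with the copy of `u` in `S_u`) is adjacent to the copies of `N_{G_k}(u)`
    (∃ (u : ↥P.T) (x : {v : P.V // v ∉ P.T}),
      a = Sum.inl ↑u ∧ b = Sum.inr (Sum.inr (u, Sum.inl x)) ∧ P.G.Adj ↑u ↑x) ∨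
    -- the clone of `u` identified with the copy of `v ∈ S_u` is adjacent to copies of `N(v)`
    (∃ (u : ↥P.T) (w : {w : ↥P.T ⊕ ↥P.T // w ≠ Sum.inl u}) (v : ↥P.T)
        (x : {v : P.V // v ∉ P.T}),
      a = Sum.inr (Sum.inl ⟨u, w⟩) ∧ b = Sum.inr (Sum.inr (u, Sum.inl x)) ∧
        (w : ↥P.T ⊕ ↥P.T) = Sum.inl v ∧ P.G.Adj ↑v ↑x) ∨
    -- the clone of `u` identified with the pendant `t_{u,v}` is adjacent to the clone `v_u`
    (∃ (u : ↥P.T) (w : {w : ↥P.T ⊕ ↥P.T // w ≠ Sum.inl u}) (v : ↥P.T),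
      a = Sum.inr (Sum.inl ⟨u, w⟩) ∧ b = Sum.inr (Sum.inr (u, Sum.inr v)) ∧
        (w : ↥P.T ⊕ ↥P.T) = Sum.inr v) ∨
    -- edges of `G_k` inside the copy `H'_u`
    (∃ (u : ↥P.T) (x y : {v : P.V // v ∉ P.T}),
      a = Sum.inr (Sum.inr (u, Sum.inl x)) ∧ b = Sum.inr (Sum.inr (u, Sum.inl y)) ∧
        P.G.Adj ↑x ↑y) ∨
    -- the clone `v_u` is adjacent to the copies of `N_{G_k}(v)`
    (∃ (u : ↥P.T) (x : {v : P.V // v ∉ P.T}) (v : ↥P.T),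
      a = Sum.inr (Sum.inr (u, Sum.inl x)) ∧ b = Sum.inr (Sum.inr (u, Sum.inr v)) ∧
        P.G.Adj ↑v ↑x))
  T := { a | (∃ u ∈ P.T, a = Sum.inl u) ∨
      (∃ c : (Σ u : ↥P.T, {w : ↥P.T ⊕ ↥P.T // w ≠ Sum.inl u}), a = Sum.inr (Sum.inl c)) }

/-- `BurlingGraft k` is the graft `(G_{k+1}, T_{k+1})`; in particular
`BurlingGraft 0 = (K₂, {t})`. -/
def BurlingGraft : ℕ → GraftData
  | 0 => ⟨Bool, ⊤, {true}⟩
  | (k + 1) => nextGraft (BurlingGraft k)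

/-- The graph `G*` obtained from a graph–stable-set pair by adding, for each `S ∈ 𝒮`,
a new vertex `v_S` whose neighbourhood is exactly `S`. -/
def GStar (P : GSPair) : SimpleGraph (P.V ⊕ ↥P.S) :=
  SimpleGraph.fromRel (fun a b =>
    (∃ u v : P.V, a = Sum.inl u ∧ b = Sum.inl v ∧ P.G.Adj u v) ∨
    (∃ (S : ↥P.S) (u : P.V), a = Sum.inr S ∧ b = Sum.inl u ∧ u ∈ (S : Set P.V)))

/-- The grafts obtainable from the graft `(K₂, {t})` by a finite sequence of pendent,
clone and join operations. -/
inductive Obtainable : GraftData → Prop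
  | base : Obtainable ⟨Bool, ⊤, {true}⟩
  | pendent (P : GraftData) (hP : Obtainable P) (t : P.V) (ht : t ∈ P.T) :
      Obtainable ⟨Option P.V, pendentGraph P.G t, pendentT P.T t⟩
  | clone (P : GraftData) (hP : Obtainable P) (t : P.V) (ht : t ∈ P.T) :
      Obtainable ⟨Option P.V, cloneGraph P.G t, cloneT P.T⟩
  | join (P Q : GraftData) (hP : Obtainable P) (hQ : Obtainable Q)
      (X : Set P.V) (hX : X ⊆ P.T)
      (hnb : ∀ x ∈ X, ∀ y ∈ X, P.G.neighborSet x = P.G.neighborSet y)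
      (φ : X ≃ ↥Q.T) :
      Obtainable ⟨P.V ⊕ {v : Q.V // v ∉ Q.T}, joinGraph P.G Q.G X Q.T φ, Sum.inl '' P.T⟩

/-!
Call a graph with a set of terminals clean if it is triangle-free, the terminals form a stable set,
no vertex has three neighbours on an induced cycle of length at least four avoiding it, no vertex
has three neighbours on an induced path avoiding it that joins two terminals, and no induced path
contains three terminals. The last two conditions make cleanness stable under adding a twin of a
vertex, under moving a terminal to a new pendant vertex, and under gluing a clean graph along a set
of terminals that are twins.

Let `G*` be the graph obtained from a Burling graph by adding one terminal for each of its stable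
sets. The terminals of the next `G*` attached to the copy `H_S` are twins of `v_S` outside `H_S`.
Together with `H_S` and the vertices `v_{S,T}` they induce a copy of the old `G*` in which each
terminal `v_T` has become the twins `v_{S,T}` and `S ∪ T`, with `S ∪ {v_{S,T}}` pendant at
`v_{S,T}`. So the next `G*` arises from the old one by these three operations, and cleanness follows
by induction.
-/

open Set

variable {V W : Type*} {G : SimpleGraph V} {T U : Set V}

theorem encard_le_two_of_subset_pair {S : Set V} {a b : V} (h : S ⊆ {a, b}) : S.encard ≤ 2 := by
  refine (encard_le_encard h).trans ((encard_insert_le _ _).trans ?_)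
  rw [encard_singleton, one_add_one_eq_two]

theorem encard_inter_neighborSet_le_of_image {G' : SimpleGraph W} {f : V → W} {C : Set V} {w : V}
    (hinj : InjOn f C) (hadj : ∀ a ∈ C, G.Adj w a → G'.Adj (f w) (f a)) :
    (C ∩ G.neighborSet w).encard ≤ (f '' C ∩ G'.neighborSet (f w)).encard := by
  rw [← (hinj.mono inter_subset_left).encard_image]
  refine encard_le_encard ?_
  rintro _ ⟨a, ⟨ha, hwa⟩, rfl⟩
  exact ⟨mem_image_of_mem f ha, hadj a ha hwa⟩

theorem exists_first_last {P : ℕ → Prop} {n i : ℕ} (hi : i ≤ n) (hPi : P i) :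
    ∃ a b, (a ≤ n ∧ P a) ∧ (b ≤ n ∧ P b) ∧ ∀ j ≤ n, P j → a ≤ j ∧ j ≤ b :=
  have hne : {j | j ≤ n ∧ P j}.Nonempty := ⟨i, hi, hPi⟩
  have hbdd : BddAbove {j | j ≤ n ∧ P j} := ⟨n, fun _ hj => hj.1⟩
  ⟨sInf _, sSup _, Nat.sInf_mem hne, Nat.sSup_mem hne hbdd,
    fun _ hj hPj => ⟨Nat.sInf_le ⟨hj, hPj⟩, le_csSup hbdd ⟨hj, hPj⟩⟩⟩

/-! ### Induced paths and cycles -/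

/-- The vertices `p 0, …, p n` form an induced path of `G`, in this order. The values of `p` beyond
`n` are irrelevant, so that subpaths and reversals are mere changes of index. -/
structure IsInducedPath (G : SimpleGraph V) (p : ℕ → V) (n : ℕ) : Prop where
  injOn : InjOn p (Iic n)
  adj_iff : ∀ ⦃i⦄, i ≤ n → ∀ ⦃j⦄, j ≤ n → (G.Adj (p i) (p j) ↔ i + 1 = j ∨ j + 1 = i)

namespace IsInducedPath

variable {p : ℕ → V} {n : ℕ}

theorem eq_iff (hp : IsInducedPath G p n) {i j : ℕ} (hi : i ≤ n) (hj : j ≤ n) :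
    p i = p j ↔ i = j :=
  hp.injOn.eq_iff hi hj

theorem adj_succ (hp : IsInducedPath G p n) {i : ℕ} (hi : i < n) : G.Adj (p i) (p (i + 1)) :=
  (hp.adj_iff hi.le hi).2 (Or.inl rfl)

theorem subpath (hp : IsInducedPath G p n) {l m : ℕ} (hlm : l + m ≤ n) :
    IsInducedPath G (fun i => p (l + i)) m where
  injOn i hi j hj hij := by
    rw [mem_Iic] at hi hj
    have := (hp.eq_iff (by omega) (by omega)).1 hij
    omega
  adj_iff i hi j hj := by
    rw [hp.adj_iff (by omega) (by omega)]
    omega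

theorem reverse (hp : IsInducedPath G p n) : IsInducedPath G (fun i => p (n - i)) n where
  injOn i hi j hj hij := by
    rw [mem_Iic] at hi hj
    have := (hp.eq_iff (by omega) (by omega)).1 hij
    omega
  adj_iff i hi j hj := by
    rw [hp.adj_iff (by omega) (by omega)]
    omega

/-- Two vertices of a path with the same neighbours on it are the ends of a path of length two. -/
theorem of_adj_iff (hn : n ≠ 2)
    (h : ∀ ⦃i⦄, i ≤ n → ∀ ⦃j⦄, j ≤ n → (G.Adj (p i) (p j) ↔ i + 1 = j ∨ j + 1 = i)) :
    IsInducedPath G p n where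
  injOn i hi j hj hij := by
    have twin : ∀ k ≤ n, (i + 1 = k ∨ k + 1 = i ↔ j + 1 = k ∨ k + 1 = j) := fun k hk => by
      rw [← h hi hk, ← h hj hk, hij]
    rw [mem_Iic] at hi hj
    have h₁ := twin (i + 1)
    have h₂ := twin (i - 1)
    have h₃ := twin (j + 1)
    have h₄ := twin (j - 1)
    omega
  adj_iff := h

theorem map (hp : IsInducedPath G p n) (hn : n ≠ 2) {G' : SimpleGraph W} {f : V → W}
    (hpU : MapsTo p (Iic n) U) (hadj : ∀ a ∈ U, ∀ b ∈ U, (G.Adj a b ↔ G'.Adj (f a) (f b))) :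
    IsInducedPath G' (f ∘ p) n :=
  of_adj_iff hn fun _ hi _ hj => (hadj _ (hpU hi) _ (hpU hj)).symm.trans (hp.adj_iff hi hj)

theorem encard_inter_neighborSet_le_two (hp : IsInducedPath G p n) {i : ℕ} (hi : i ≤ n) :
    (p '' Iic n ∩ G.neighborSet (p i)).encard ≤ 2 := by
  refine encard_le_two_of_subset_pair (a := p (i + 1)) (b := p (i - 1)) ?_
  rintro _ ⟨⟨j, hj, rfl⟩, hij⟩
  rcases (hp.adj_iff hi hj).1 hij with rfl | rfl
  exacts [Or.inl rfl, Or.inr rfl]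

theorem encard_inter_neighborSet_le_two_of_triangle_free (hp : IsInducedPath G p 2) {w : V}
    (hw : ∀ a ∈ p '' Iic 2, ∀ b ∈ p '' Iic 2, G.Adj w a → G.Adj a b → ¬ G.Adj w b) :
    (p '' Iic 2 ∩ G.neighborSet w).encard ≤ 2 := by
  have mem : ∀ i ≤ 2, p i ∈ p '' Iic 2 := fun i hi => ⟨i, hi, rfl⟩
  have h₀₁ := hw _ (mem 0 (by omega)) _ (mem 1 (by omega))
  have h₂₁ := hw _ (mem 2 (by omega)) _ (mem 1 (by omega))
  by_cases h₁ : G.Adj w (p 1)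
  · refine encard_le_two_of_subset_pair (a := p 1) (b := p 1) ?_
    rintro _ ⟨⟨i, hi, rfl⟩, hwi⟩
    obtain rfl | rfl | rfl : i = 0 ∨ i = 1 ∨ i = 2 := by rw [mem_Iic] at hi; omega
    exacts [(h₀₁ hwi (hp.adj_succ two_pos) h₁).elim, Or.inl rfl,
      (h₂₁ hwi (hp.adj_succ one_lt_two).symm h₁).elim]
  · refine encard_le_two_of_subset_pair (a := p 0) (b := p 2) ?_
    rintro _ ⟨⟨i, hi, rfl⟩, hwi⟩
    obtain rfl | rfl | rfl : i = 0 ∨ i = 1 ∨ i = 2 := by rw [mem_Iic] at hi; omega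
    exacts [Or.inl rfl, (h₁ hwi).elim, Or.inr rfl]

/-- Shortcut of an induced path through a vertex `w` whose first and last neighbours on the path
are `p x` and `p (x + 2 + d)`. -/
theorem splice (hp : IsInducedPath G p n) {w : V} {x d : ℕ} (hxd : x + 2 + d ≤ n)
    (hw : w ∉ p '' Iic n) (hx : G.Adj w (p x)) (hy : G.Adj w (p (x + 2 + d)))
    (hhits : ∀ i ≤ n, G.Adj w (p i) → x ≤ i ∧ i ≤ x + 2 + d) :
    IsInducedPath G (fun i => if i ≤ x then p i else if i = x + 1 then w else p (i + d))
      (n - d) := by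
  have hwp : ∀ i ≤ n, w ≠ p i := fun i hi h => hw ⟨i, hi, h.symm⟩
  have hadj : ∀ i ≤ n, i ≤ x ∨ x + 2 + d ≤ i → (G.Adj w (p i) ↔ i = x ∨ i = x + 2 + d) := by
    intro i hi hi'
    refine ⟨fun h => ?_, ?_⟩
    · have := hhits i hi h
      omega
    · rintro (rfl | rfl) <;> assumption
  constructor
  · intro i hi j hj hij
    have hinj := @hp.eq_iff
    grind
  · intro i hi j hj
    have hpp := @hp.adj_iff
    have hsymm := fun i => G.adj_comm (p i) w
    have hirr := G.irrefl (v := w)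
    split_ifs <;> grind

end IsInducedPath

/-- `C` is the vertex set of an induced cycle of length `m` of `G`. -/
def IsInducedCycle (G : SimpleGraph V) (C : Set V) (m : ℕ) : Prop :=
  ∃ c : SimpleGraph.cycleGraph m ↪g G, range c = C

theorem fin_sub_eq_one_iff {n : ℕ} {x y : Fin (n + 2)} :
    x - y = 1 ↔ x.val = y.val + 1 ∨ x.val = 0 ∧ y.val = n + 1 := by
  rw [sub_eq_iff_eq_add, add_comm 1 y, Fin.ext_iff, Fin.val_add_one]
  split_ifs with hy <;> rw [Fin.ext_iff, Fin.val_last] at hy <;> omega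

namespace IsInducedCycle

variable {C : Set V} {n : ℕ} {u : V}

theorem exists_path (hC : IsInducedCycle G C (n + 2)) (hu : u ∈ C) :
    ∃ p, IsInducedPath G p n ∧ u ∉ p '' Iic n ∧ C = insert u (p '' Iic n) ∧
      ∀ i ≤ n, (G.Adj u (p i) ↔ i = 0 ∨ i = n) := by
  obtain ⟨c, rfl⟩ := hC
  obtain ⟨r, rfl⟩ := hu
  let q : ℕ → V := fun a => c (r + Fin.ofNat (n + 2) a)
  have q_zero : q 0 = c r := by simp [q]
  have q_adj : ∀ {a b}, a < n + 2 → b < n + 2 → (G.Adj (q a) (q b) ↔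
      (a = b + 1 ∨ a = 0 ∧ b = n + 1) ∨ (b = a + 1 ∨ b = 0 ∧ a = n + 1)) := fun ha hb => by
    rw [c.map_adj_iff, SimpleGraph.cycleGraph_adj, add_sub_add_left_eq_sub,
      add_sub_add_left_eq_sub, fin_sub_eq_one_iff, fin_sub_eq_one_iff, Fin.val_ofNat,
      Fin.val_ofNat, Nat.mod_eq_of_lt ha, Nat.mod_eq_of_lt hb]
  have q_inj : ∀ {a b}, a < n + 2 → b < n + 2 → q a = q b → a = b := fun ha hb hab => by
    have := congrArg Fin.val (add_left_cancel (c.injective hab))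
    rwa [Fin.val_ofNat, Fin.val_ofNat, Nat.mod_eq_of_lt ha, Nat.mod_eq_of_lt hb] at this
  refine ⟨fun i => q (i + 1), ⟨fun i hi j hj hij => ?_, fun i hi j hj => ?_⟩, ?_, ?_,
    fun i hi => ?_⟩
  · rw [mem_Iic] at hi hj
    exact Nat.succ_injective (q_inj (by omega) (by omega) hij)
  · rw [q_adj (by omega) (by omega)]
    omega
  · rintro ⟨i, hi, hir⟩
    rw [mem_Iic] at hi
    have := q_inj (by omega) (by omega) (hir.trans q_zero.symm)
    omega
  · refine Subset.antisymm ?_ (insert_subset (mem_range_self r) ?_)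
    · rintro _ ⟨y, rfl⟩
      have hy : q (y - r).val = c y := by simp [q]
      rw [← hy, ← q_zero]
      rcases Nat.eq_zero_or_pos (y - r).val with h | h
      · exact Or.inl (by rw [h])
      · exact Or.inr ⟨(y - r).val - 1, by rw [mem_Iic]; omega, by simp only [Nat.sub_add_cancel h]⟩
    · rintro _ ⟨i, -, rfl⟩
      exact mem_range_self _
  · rw [← q_zero, q_adj (by omega) (by omega)]
    omega

theorem encard_inter_neighborSet_le_two (hC : IsInducedCycle G C (n + 2)) (hu : u ∈ C) :
    (C ∩ G.neighborSet u).encard ≤ 2 := by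
  obtain ⟨p, -, -, rfl, hup⟩ := hC.exists_path hu
  refine encard_le_two_of_subset_pair (a := p 0) (b := p n) ?_
  rintro _ ⟨rfl | ⟨i, hi, rfl⟩, hui⟩
  · exact (G.irrefl hui).elim
  · rcases (hup i hi).1 hui with rfl | rfl
    exacts [Or.inl rfl, Or.inr rfl]

theorem encard_inter_neighborSet_le_two_of_triangle_free (hC : IsInducedCycle G C 4) {w : V}
    (hw : ∀ a ∈ C, ∀ b ∈ C, G.Adj w a → G.Adj a b → ¬ G.Adj w b) :
    (C ∩ G.neighborSet w).encard ≤ 2 := by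
  rcases (C ∩ G.neighborSet w).eq_empty_or_nonempty with h | ⟨u, hu, hwu⟩
  · simp [h]
  obtain ⟨p, -, -, rfl, hup⟩ := hC.exists_path hu
  refine encard_le_two_of_subset_pair (a := u) (b := p 1) ?_
  rintro _ ⟨rfl | ⟨i, hi, rfl⟩, hwi⟩
  · exact Or.inl rfl
  rw [mem_Iic] at hi
  obtain hi' | rfl : (i = 0 ∨ i = 2) ∨ i = 1 := by omega
  · exact (hw u hu _ (Or.inr ⟨i, hi, rfl⟩) hwu ((hup i hi).2 hi') hwi).elim
  · exact Or.inr rfl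

theorem eq_of_forall_adj (hC : IsInducedCycle G C (n + 2)) (hn : 3 ≤ n) (hu : u ∈ C) {v : V}
    (hv : v ∈ C) (huv : ∀ x ∈ C, G.Adj u x → G.Adj v x) : u = v := by
  obtain ⟨p, hp, -, rfl, hup⟩ := hC.exists_path hu
  rcases hv with rfl | ⟨i, hi, rfl⟩
  · rfl
  have mem : ∀ j ≤ n, p j ∈ insert u (p '' Iic n) := fun j hj => Or.inr ⟨j, hj, rfl⟩
  have h₀ := (hp.adj_iff hi n.zero_le).1 (huv _ (mem 0 n.zero_le) ((hup 0 n.zero_le).2 (.inl rfl)))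
  have hₙ := (hp.adj_iff hi le_rfl).1 (huv _ (mem n le_rfl) ((hup n le_rfl).2 (.inr rfl)))
  omega

theorem image {G' : SimpleGraph W} {f : V → W} (hC : IsInducedCycle G C n) (hinj : InjOn f C)
    (hadj : ∀ a ∈ C, ∀ b ∈ C, (G.Adj a b ↔ G'.Adj (f a) (f b))) :
    IsInducedCycle G' (f '' C) n := by
  obtain ⟨c, rfl⟩ := hC
  refine ⟨⟨⟨fun i => f (c i), fun i j hij => ?_⟩, fun {i j} => ?_⟩, range_comp f c⟩
  · exact c.injective (hinj (mem_range_self i) (mem_range_self j) hij)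
  · exact (hadj _ (mem_range_self i) _ (mem_range_self j)).symm.trans c.map_adj_iff

end IsInducedCycle

/-! ### Clean graphs -/

/-- The subgraph of `G` induced on `U` together with the terminals `T ∩ U` is a clean graft, as in
`IsCleanGraft`. A mountable path is cut down to one running between two terminals. -/
structure IsCleanOn (G : SimpleGraph V) (T U : Set V) : Prop where
  triangle_free : ∀ ⦃a⦄, a ∈ U → ∀ ⦃b⦄, b ∈ U → ∀ ⦃c⦄, c ∈ U →
    G.Adj a b → G.Adj b c → ¬ G.Adj a c
  stable : ∀ ⦃a⦄, a ∈ U → a ∈ T → ∀ ⦃b⦄, b ∈ U → b ∈ T → ¬ G.Adj a b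
  inner_notMem : ∀ ⦃p n⦄, IsInducedPath G p n → MapsTo p (Iic n) U → p 0 ∈ T → p n ∈ T →
    ∀ ⦃j⦄, 0 < j → j < n → p j ∉ T
  fan_le_two : ∀ ⦃p n⦄, IsInducedPath G p n → MapsTo p (Iic n) U → p 0 ∈ T → p n ∈ T →
    ∀ ⦃w⦄, w ∈ U → w ∉ p '' Iic n → (p '' Iic n ∩ G.neighborSet w).encard ≤ 2
  wheel_le_two : ∀ ⦃C n⦄, IsInducedCycle G C (n + 2) → 2 ≤ n → C ⊆ U →
    ∀ ⦃w⦄, w ∈ U → w ∉ C → (C ∩ G.neighborSet w).encard ≤ 2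

namespace IsCleanOn

theorem not_isWheel (h : IsCleanOn G T univ) : ¬ IsWheel G := by
  rintro ⟨w, n, hn, ⟨e⟩, hw⟩
  obtain ⟨n, rfl⟩ : ∃ m, n = m + 2 := ⟨n - 2, by omega⟩
  have hC : IsInducedCycle G {u | u ≠ w} (n + 2) :=
    ⟨(SimpleGraph.Embedding.induce _).comp e.symm.toEmbedding, Subset.antisymm
      (range_subset_iff.2 fun i => (e.symm i).2)
      fun u hu => ⟨e ⟨u, hu⟩, congrArg Subtype.val (e.symm_apply_apply ⟨u, hu⟩)⟩⟩
  have hle := h.wheel_le_two hC (by omega) (subset_univ _) (mem_univ w) (· rfl)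
  rw [inter_eq_right.2 fun u hu => hu.ne'] at hle
  have hcard : (G.neighborSet w).ncard ≤ 2 := ENat.toNat_le_of_le_natCast hle
  omega

variable {p : ℕ → V} {n : ℕ}

theorem inner_notMem_of_subpath (h : IsCleanOn G T U) (hp : IsInducedPath G p n) {a b j : ℕ}
    (hb : b ≤ n) (hpU : MapsTo p (Icc a b) U) (haT : p a ∈ T) (hbT : p b ∈ T) (haj : a < j)
    (hjb : j < b) : p j ∉ T := by
  obtain ⟨m, rfl⟩ := Nat.exists_eq_add_of_le (haj.trans hjb).le
  obtain ⟨i, rfl⟩ := Nat.exists_eq_add_of_le haj.le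
  exact h.inner_notMem (hp.subpath hb) (fun t ht => hpU ⟨a.le_add_right t, by gcongr; exact ht⟩)
    haT hbT (by omega) (by omega)

theorem fan_le_two_of_subpath (h : IsCleanOn G T U) (hp : IsInducedPath G p n) {a b : ℕ}
    (hab : a ≤ b) (hb : b ≤ n) (hpU : MapsTo p (Icc a b) U) (haT : p a ∈ T) (hbT : p b ∈ T)
    {w : V} (hw : w ∈ U) (hwp : w ∉ p '' Icc a b) :
    (p '' Icc a b ∩ G.neighborSet w).encard ≤ 2 := by
  obtain ⟨m, rfl⟩ := Nat.exists_eq_add_of_le hab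
  have himage : (fun i => p (a + i)) '' Iic m = p '' Icc a (a + m) := by
    ext x
    constructor
    · rintro ⟨i, hi, rfl⟩
      exact ⟨a + i, ⟨a.le_add_right i, by gcongr; exact hi⟩, rfl⟩
    · rintro ⟨i, ⟨hai, him⟩, rfl⟩
      exact ⟨i - a, by rw [mem_Iic]; omega, by simp only [Nat.add_sub_of_le hai]⟩
  rw [← himage] at hwp ⊢
  exact h.fan_le_two (hp.subpath hb)
    (fun t ht => hpU ⟨a.le_add_right t, by gcongr; exact ht⟩) haT hbT hw hwp

theorem encard_path_inter_le_two (h : IsCleanOn G T U) (hp : IsInducedPath G p n)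
    (hpU : MapsTo p (Iic n) U) : (p '' Iic n ∩ T).encard ≤ 2 := by
  rcases (p '' Iic n ∩ T).eq_empty_or_nonempty with hT | ⟨_, ⟨i, hi, rfl⟩, hiT⟩
  · simp [hT]
  obtain ⟨a, b, ⟨ha, haT⟩, ⟨hb, hbT⟩, hab⟩ :=
    exists_first_last (P := fun j => p j ∈ T) hi hiT
  refine encard_le_two_of_subset_pair (a := p a) (b := p b) ?_
  rintro _ ⟨⟨j, hj, rfl⟩, hjT⟩
  obtain ⟨haj, hjb⟩ := hab j hj hjT
  by_contra hne
  rw [mem_insert_iff, mem_singleton_iff, not_or, hp.eq_iff hj ha, hp.eq_iff hj hb] at hne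
  exact h.inner_notMem_of_subpath hp hb (fun t ht => hpU (ht.2.trans hb)) haT hbT
    (by omega) (by omega) hjT

theorem encard_cycle_inter_le_two (h : IsCleanOn G T U) {C : Set V}
    (hC : IsInducedCycle G C (n + 2)) (hCU : C ⊆ U) : (C ∩ T).encard ≤ 2 := by
  rcases (C ∩ T).eq_empty_or_nonempty with hT | ⟨u, hu, huT⟩
  · simp [hT]
  obtain ⟨v, hv, hvT⟩ : ∃ v ∈ C, v ∉ T := by
    obtain ⟨p, -, -, rfl, hup⟩ := hC.exists_path hu
    have hv : p 0 ∈ insert u (p '' Iic n) := Or.inr ⟨0, n.zero_le, rfl⟩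
    exact ⟨p 0, hv, fun hvT =>
      h.stable (hCU hu) huT (hCU hv) hvT ((hup 0 n.zero_le).2 (.inl rfl))⟩
  obtain ⟨p, hp, -, rfl, -⟩ := hC.exists_path hv
  rw [insert_inter_of_notMem hvT]
  exact h.encard_path_inter_le_two hp fun i hi => hCU (Or.inr ⟨i, hi, rfl⟩)

/-- Otherwise the shortcut of the path through `w` would be mountable. -/
theorem subsingleton_inter_neighborSet (h : IsCleanOn G T U) (hp : IsInducedPath G p n)
    (hpU : MapsTo p (Iic n) U) (h₀ : p 0 ∈ T) (hₙ : p n ∈ T) {w : V} (hwU : w ∈ U) (hwT : w ∈ T)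
    (hwp : w ∉ p '' Iic n) : (p '' Iic n ∩ G.neighborSet w).Subsingleton := by
  rintro _ ⟨⟨i, hi, rfl⟩, hwi⟩ _ ⟨⟨j, hj, rfl⟩, hwj⟩
  obtain ⟨x, y, ⟨hx, hwx⟩, ⟨hy, hwy⟩, hxy⟩ :=
    exists_first_last (P := fun j => G.Adj w (p j)) hi hwi
  obtain ⟨hxi, hiy⟩ := hxy i hi hwi
  obtain ⟨hxj, hjy⟩ := hxy j hj hwj
  obtain rfl | hlt := (hxi.trans hiy).eq_or_lt
  · rw [hiy.antisymm hxi, hjy.antisymm hxj]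
  exfalso
  have hne : x + 1 ≠ y := by
    rintro rfl
    exact h.triangle_free hwU (hpU hx) (hpU hy) hwx (hp.adj_succ hy) hwy
  have hx₀ : x ≠ 0 := by
    rintro rfl
    exact h.stable hwU hwT (hpU hx) h₀ hwx
  have hyₙ : y ≠ n := by
    rintro rfl
    exact h.stable hwU hwT (hpU hy) hₙ hwy
  obtain ⟨d, rfl⟩ : ∃ d, y = x + 2 + d := ⟨y - (x + 2), by omega⟩
  refine h.inner_notMem (hp.splice hy hwp hwx hwy hxy) (fun t ht => ?_) ?_ ?_ (j := x + 1)
    x.succ_pos (by omega) ?_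
  · rw [mem_Iic] at ht
    dsimp only
    split_ifs
    exacts [hpU (mem_Iic.2 (by omega)), hwU, hpU (mem_Iic.2 (by omega))]
  · rwa [if_pos x.zero_le]
  · rwa [if_neg (by omega), if_neg (by omega), Nat.sub_add_cancel (by omega)]
  · rwa [if_neg (by omega), if_pos rfl]

theorem of_encard_le_two (hU : U.encard ≤ 2) (hT : (T ∩ U).Subsingleton) :
    IsCleanOn G T U where
  triangle_free a ha b hb c hc hab hbc hac := by
    have hsub : ({a, b, c} : Set V) ⊆ U := by simp [insert_subset_iff, ha, hb, hc]
    have hcard := (encard_le_encard hsub).trans hU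
    rw [encard_eq_three.2 ⟨a, b, c, hab.ne, hac.ne, hbc.ne, rfl⟩] at hcard
    exact absurd hcard (by decide)
  stable a ha haT b hb hbT hab := hab.ne (hT ⟨haT, ha⟩ ⟨hbT, hb⟩)
  inner_notMem p n hp hpU h₀ hₙ j hj hjn _ := by
    have := (hp.eq_iff n.zero_le le_rfl).1 (hT ⟨h₀, hpU n.zero_le⟩ ⟨hₙ, hpU self_mem_Iic⟩)
    omega
  fan_le_two _ _ _ hpU _ _ _ _ _ :=
    (encard_le_encard (inter_subset_left.trans hpU.image_subset)).trans hU
  wheel_le_two _ _ _ _ hCU _ _ _ := (encard_le_encard (inter_subset_left.trans hCU)).trans hU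

section comap

variable {G' : SimpleGraph W} {T' U' : Set W} {f : V → W}

theorem fan_le_two_of_comap (h : IsCleanOn G' T' U') (hU : MapsTo f U U')
    (hadj : ∀ a ∈ U, ∀ b ∈ U, (G.Adj a b ↔ G'.Adj (f a) (f b))) (hp : IsInducedPath G p n)
    (hn : n ≠ 2) (hpU : MapsTo p (Iic n) U) (h₀ : f (p 0) ∈ T') (hₙ : f (p n) ∈ T') {w : V}
    (hw : w ∈ U) : (p '' Iic n ∩ G.neighborSet w).encard ≤ 2 := by
  have hfp := hp.map hn hpU hadj
  by_cases htwin : f w ∈ f ∘ p '' Iic n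
  · obtain ⟨i, hi, hiw⟩ := htwin
    refine (encard_le_encard ?_).trans (hp.encard_inter_neighborSet_le_two hi)
    rintro _ ⟨⟨j, hj, rfl⟩, hwj⟩
    refine ⟨⟨j, hj, rfl⟩, ?_⟩
    rwa [SimpleGraph.mem_neighborSet, hadj _ (hpU hi) _ (hpU hj), ← Function.comp_apply (f := f),
      hiw, ← hadj w hw _ (hpU hj)]
  · have hinj : InjOn f (p '' Iic n) := hfp.injOn.image_of_comp
    have hfan := h.fan_le_two hfp (hU.comp hpU) h₀ hₙ (hU hw) htwin
    rw [image_comp] at hfan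
    exact (encard_inter_neighborSet_le_of_image hinj fun a ha => by
      obtain ⟨i, hi, rfl⟩ := ha
      exact (hadj w hw _ (hpU hi)).1).trans hfan

theorem wheel_le_two_of_comap (h : IsCleanOn G' T' U') (hU : MapsTo f U U')
    (hadj : ∀ a ∈ U, ∀ b ∈ U, (G.Adj a b ↔ G'.Adj (f a) (f b))) {C : Set V}
    (hC : IsInducedCycle G C (n + 2)) (hn : 3 ≤ n) (hCU : C ⊆ U) {w : V} (hw : w ∈ U) :
    (C ∩ G.neighborSet w).encard ≤ 2 := by
  by_cases htwin : f w ∈ f '' C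
  · obtain ⟨v, hv, hvw⟩ := htwin
    refine (encard_le_encard ?_).trans (hC.encard_inter_neighborSet_le_two hv)
    rintro a ⟨ha, hwa⟩
    refine ⟨ha, ?_⟩
    rwa [SimpleGraph.mem_neighborSet, hadj v (hCU hv) a (hCU ha), hvw, ← hadj w hw a (hCU ha)]
  · have hinj : InjOn f C := fun u hu v hv huv =>
      hC.eq_of_forall_adj hn hu hv fun x hx hux => by
        rwa [hadj v (hCU hv) x (hCU hx), ← huv, ← hadj u (hCU hu) x (hCU hx)]
    have hfC := hC.image hinj fun a ha b hb => hadj a (hCU ha) b (hCU hb)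
    exact (encard_inter_neighborSet_le_of_image hinj fun a ha => (hadj w hw a (hCU ha)).1).trans
      (h.wheel_le_two hfC (by omega) (hU.image_subset.trans' (image_mono hCU)) (hU hw) htwin)

/-- Cleanness passes to induced subgraphs and is preserved by adding twins. Twins on a path or on a
cycle only occur in a path of length two or a cycle of length four, where the absence of triangles
suffices. -/
theorem comap (h : IsCleanOn G' T' U') (f : V → W) (hU : MapsTo f U U') (hT : MapsTo f (T ∩ U) T')
    (hadj : ∀ a ∈ U, ∀ b ∈ U, (G.Adj a b ↔ G'.Adj (f a) (f b))) : IsCleanOn G T U := by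
  have htri : ∀ ⦃a⦄, a ∈ U → ∀ ⦃b⦄, b ∈ U → ∀ ⦃c⦄, c ∈ U → G.Adj a b → G.Adj b c → ¬ G.Adj a c :=
    fun a ha b hb c hc => by
      rw [hadj a ha b hb, hadj b hb c hc, hadj a ha c hc]
      exact h.triangle_free (hU ha) (hU hb) (hU hc)
  have hstable : ∀ ⦃a⦄, a ∈ U → a ∈ T → ∀ ⦃b⦄, b ∈ U → b ∈ T → ¬ G.Adj a b :=
    fun a ha haT b hb hbT => by
      rw [hadj a ha b hb]
      exact h.stable (hU ha) (hT ⟨haT, ha⟩) (hU hb) (hT ⟨hbT, hb⟩)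
  refine ⟨htri, hstable, fun p n hp hpU h₀ hₙ j hj hjn hjT => ?_,
    fun p n hp hpU h₀ hₙ w hw _ => ?_, fun C n hC hn hCU w hw _ => ?_⟩
  · rcases eq_or_ne n 2 with rfl | hn
    · obtain rfl : j = 0 + 1 := by omega
      exact hstable (hpU (Nat.zero_le 2)) h₀ (hpU hjn.le) hjT (hp.adj_succ two_pos)
    · exact h.inner_notMem (hp.map hn hpU hadj) (hU.comp hpU) (hT ⟨h₀, hpU n.zero_le⟩)
        (hT ⟨hₙ, hpU self_mem_Iic⟩) hj hjn (hT ⟨hjT, hpU hjn.le⟩)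
  · rcases eq_or_ne n 2 with rfl | hn
    · have hpU' := hpU.image_subset
      exact hp.encard_inter_neighborSet_le_two_of_triangle_free fun a ha b hb hwa hab =>
        htri hw (hpU' ha) (hpU' hb) hwa hab
    · exact h.fan_le_two_of_comap hU hadj hp hn hpU (hT ⟨h₀, hpU n.zero_le⟩)
        (hT ⟨hₙ, hpU self_mem_Iic⟩) hw
  · rcases hn.eq_or_lt with rfl | hn
    · exact hC.encard_inter_neighborSet_le_two_of_triangle_free fun a ha b hb hwa hab =>
        htri hw (hCU ha) (hCU hb) hwa hab
    · exact h.wheel_le_two_of_comap hU hadj hC hn hCU hw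

end comap

section pendant

variable {N T' : Set V}

theorem notMem_pendant_of_inner (hN : ∀ a ∈ N, ∃ t, ∀ y ∈ U, G.Adj a y → y = t)
    (hp : IsInducedPath G p n) (hpU : MapsTo p (Iic n) U) {i : ℕ} (hi : 0 < i) (hin : i < n) :
    p i ∉ N := fun hiN => by
  obtain ⟨t, ht⟩ := hN _ hiN
  have hpred : p (i - 1) = t := ht _ (hpU (mem_Iic.2 (by omega)))
    ((hp.adj_iff (by omega) (by omega)).2 (by omega))
  have hsucc : p (i + 1) = t := ht _ (hpU (mem_Iic.2 (by omega)))
    ((hp.adj_iff (by omega) (by omega)).2 (by omega))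
  have := (hp.eq_iff (by omega) (by omega)).1 (hpred.trans hsucc.symm)
  omega

theorem notMem_pendant_of_cycle (hN : ∀ a ∈ N, ∃ t, ∀ y ∈ U, G.Adj a y → y = t) {C : Set V}
    (hC : IsInducedCycle G C (n + 2)) (hn : 0 < n) (hCU : C ⊆ U) {u : V} (hu : u ∈ C) :
    u ∉ N := fun huN => by
  obtain ⟨t, ht⟩ := hN u huN
  obtain ⟨p, hp, -, rfl, hup⟩ := hC.exists_path hu
  have h₀ : p 0 = t := ht _ (hCU (Or.inr ⟨0, n.zero_le, rfl⟩)) ((hup 0 n.zero_le).2 (.inl rfl))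
  have hₙ : p n = t := ht _ (hCU (Or.inr ⟨n, self_mem_Iic, rfl⟩)) ((hup n le_rfl).2 (.inr rfl))
  exact hn.ne ((hp.eq_iff n.zero_le le_rfl).1 (h₀.trans hₙ.symm))

theorem exists_first_of_pendant
    (hN : ∀ a ∈ N, ∃ t ∈ T ∩ U, t ∉ T' ∧ ∀ y ∈ U ∪ N, G.Adj a y → y = t) (hT' : T' ⊆ N ∪ T)
    (hp : IsInducedPath G p n) (hn : 0 < n) (hpU : MapsTo p (Iic n) (U ∪ N)) (h₀ : p 0 ∈ T') :
    ∃ l ≤ 1, p l ∈ T ∩ U ∧ (l = 1 → p l ∉ T' ∧ ∀ w ∈ U, G.Adj w (p 0) → w = p l) := by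
  by_cases h₀N : p 0 ∈ N
  · obtain ⟨t, htTU, htT', ht⟩ := hN _ h₀N
    obtain rfl : p 1 = t := ht _ (hpU (mem_Iic.2 hn)) (hp.adj_succ hn)
    exact ⟨1, le_rfl, htTU, fun _ => ⟨htT', fun w hw hw₀ => ht w (Or.inl hw) hw₀.symm⟩⟩
  · exact ⟨0, zero_le_one, ⟨(hT' h₀).resolve_left h₀N, (hpU n.zero_le).resolve_right h₀N⟩,
      fun h => (zero_ne_one h).elim⟩

/-- The part of the path outside `N` is `p l, …, p r`. -/
theorem exists_core_of_pendant
    (hN : ∀ a ∈ N, ∃ t ∈ T ∩ U, t ∉ T' ∧ ∀ y ∈ U ∪ N, G.Adj a y → y = t) (hT' : T' ⊆ N ∪ T)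
    (hp : IsInducedPath G p n) (hn : 0 < n) (hpU : MapsTo p (Iic n) (U ∪ N)) (h₀ : p 0 ∈ T')
    (hₙ : p n ∈ T') :
    ∃ l r, l ≤ r ∧ r ≤ n ∧ p l ∈ T ∧ p r ∈ T ∧ MapsTo p (Icc l r) U ∧
      (∀ i, 0 < i → i < n → p i ∈ T' → p i ∈ T ∧ l < i ∧ i < r) ∧
      ∀ w ∈ U, w ∉ p '' Iic n → ∀ i ≤ n, G.Adj w (p i) → l ≤ i ∧ i ≤ r := by
  have inner : ∀ i, 0 < i → i < n → p i ∉ N := fun i =>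
    notMem_pendant_of_inner (fun a ha => (hN a ha).imp fun t ht => ht.2.2) hp hpU
  obtain ⟨l, hl, ⟨hlT, hlU⟩, hl₁⟩ := exists_first_of_pendant hN hT' hp hn hpU h₀
  obtain ⟨l', hl', ⟨hrT, hrU⟩, hr₁⟩ := exists_first_of_pendant hN hT' hp.reverse hn
    (fun i _ => hpU (n.sub_le i)) hₙ
  have hln : l = 1 → n ≠ 1 := by
    rintro rfl rfl
    exact (hl₁ rfl).1 hₙ
  refine ⟨l, n - l', by omega, by omega, hlT, hrT, fun i ⟨hli, hir⟩ => ?_, fun i hi hin hiT' => ?_,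
    fun w hw hwp i hi hwi => ?_⟩
  · rcases hli.eq_or_lt with rfl | hli
    · exact hlU
    rcases hir.eq_or_lt with rfl | hir
    · exact hrU
    exact (hpU (mem_Iic.2 (by omega))).resolve_right (inner i (by omega) (by omega))
  · have hil : i ≠ l := by
      rintro rfl
      exact (hl₁ (by omega)).1 hiT'
    have hir : i ≠ n - l' := by
      rintro rfl
      exact (hr₁ (by omega)).1 hiT'
    exact ⟨(hT' hiT').resolve_left (inner i hi hin), by omega, by omega⟩
  · by_contra
    obtain ⟨rfl, rfl⟩ | ⟨rfl, rfl⟩ : (i = 0 ∧ l = 1) ∨ (i = n ∧ l' = 1) := by omega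
    · exact hwp ⟨1, hn, ((hl₁ rfl).2 w hw hwi).symm⟩
    · exact hwp ⟨i - 1, Nat.sub_le _ _, ((hr₁ rfl).2 w hw hwi).symm⟩

theorem fan_le_two_of_pendant (h : IsCleanOn G T U)
    (hN : ∀ a ∈ N, ∃ t ∈ T ∩ U, t ∉ T' ∧ ∀ y ∈ U ∪ N, G.Adj a y → y = t) (hT' : T' ⊆ N ∪ T)
    (hp : IsInducedPath G p n) (hpU : MapsTo p (Iic n) (U ∪ N)) (h₀ : p 0 ∈ T') (hₙ : p n ∈ T')
    {w : V} (hw : w ∈ U ∪ N) (hwp : w ∉ p '' Iic n) :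
    (p '' Iic n ∩ G.neighborSet w).encard ≤ 2 := by
  rcases hw with hw | hw
  · rcases n.eq_zero_or_pos with rfl | hn
    · refine encard_le_two_of_subset_pair (a := p 0) (b := p 0) ?_
      rintro _ ⟨⟨i, hi, rfl⟩, -⟩
      exact Or.inl (congrArg p (Nat.le_zero.1 hi))
    obtain ⟨l, r, hlr, hrn, hl, hr, hlrU, -, hhits⟩ :=
      exists_core_of_pendant hN hT' hp hn hpU h₀ hₙ
    have hIcc : Icc l r ⊆ Iic n := fun i hi => hi.2.trans hrn
    refine (encard_le_encard ?_).trans (h.fan_le_two_of_subpath hp hlr hrn hlrU hl hr hw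
      fun hwlr => hwp (image_mono hIcc hwlr))
    rintro _ ⟨⟨i, hi, rfl⟩, hwi⟩
    exact ⟨⟨i, hhits w hw hwp i hi hwi, rfl⟩, hwi⟩
  · obtain ⟨t, -, -, ht⟩ := hN w hw
    exact encard_le_two_of_subset_pair (a := t) (b := t) fun y hy =>
      Or.inl (ht y (hpU.image_subset hy.1) hy.2)

/-- New pendant vertices may take over the role of terminal from their neighbours. -/
theorem pendant (h : IsCleanOn G T U)
    (hN : ∀ a ∈ N, ∃ t ∈ T ∩ U, t ∉ T' ∧ ∀ y ∈ U ∪ N, G.Adj a y → y = t) (hT' : T' ⊆ N ∪ T) :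
    IsCleanOn G T' (U ∪ N) where
  triangle_free a ha b hb c hc hab hbc hac := by
    have notMem : ∀ ⦃x⦄, x ∈ N → ∀ ⦃y⦄, y ∈ U ∪ N → ∀ ⦃z⦄, z ∈ U ∪ N → G.Adj x y → G.Adj x z →
        ¬ G.Adj y z := fun x hx y hy z hz hxy hxz hyz => by
      obtain ⟨t, -, -, ht⟩ := hN x hx
      exact hyz.ne ((ht y hy hxy).trans (ht z hz hxz).symm)
    exact h.triangle_free (ha.resolve_right fun h => notMem h hb hc hab hac hbc)
      (hb.resolve_right fun h => notMem h ha hc hab.symm hbc hac)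
      (hc.resolve_right fun h => notMem h ha hb hac.symm hbc.symm hab) hab hbc hac
  stable a ha haT b hb hbT hab := by
    have notMem : ∀ ⦃x⦄, x ∈ N → ∀ ⦃y⦄, y ∈ U ∪ N → y ∈ T' → ¬ G.Adj x y :=
        fun x hx y hy hyT hxy => by
      obtain ⟨t, -, htT', ht⟩ := hN x hx
      exact htT' (ht y hy hxy ▸ hyT)
    have haN : a ∉ N := fun h => notMem h hb hbT hab
    have hbN : b ∉ N := fun h => notMem h ha haT hab.symm
    exact h.stable (ha.resolve_right haN) ((hT' haT).resolve_left haN) (hb.resolve_right hbN)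
      ((hT' hbT).resolve_left hbN) hab
  inner_notMem p n hp hpU h₀ hₙ j hj hjn hjT' := by
    obtain ⟨l, r, -, hrn, hl, hr, hlrU, hinner, -⟩ :=
      exists_core_of_pendant hN hT' hp (hj.trans hjn) hpU h₀ hₙ
    obtain ⟨hjT, hlj, hjr⟩ := hinner j hj hjn hjT'
    exact h.inner_notMem_of_subpath hp hrn hlrU hl hr hlj hjr hjT
  fan_le_two _ _ hp hpU h₀ hₙ _ := h.fan_le_two_of_pendant hN hT' hp hpU h₀ hₙ
  wheel_le_two C n hC hn hCU w hw hwC := by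
    have hCU' : C ⊆ U := fun u hu => (hCU hu).resolve_right <|
      notMem_pendant_of_cycle (fun a ha => (hN a ha).imp fun t ht => ht.2.2) hC (by omega) hCU hu
    rcases hw with hw | hw
    · exact h.wheel_le_two hC hn hCU' hw hwC
    · obtain ⟨t, -, -, ht⟩ := hN w hw
      exact encard_le_two_of_subset_pair (a := t) (b := t) fun y hy => Or.inl (ht y (hCU hy.1) hy.2)

end pendant

end IsCleanOn

/-! ### Gluing clean graphs -/

/-- `B` is one of the graphs glued onto a graft by the join operation: it contains no terminal, is
attached along the set `X` of terminals, and the vertices of `X` are twins outside `B`. -/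
structure IsBlock (G : SimpleGraph V) (T B X : Set V) : Prop where
  subset : X ⊆ T
  disjoint : Disjoint B T
  adj_mem : ∀ ⦃b⦄, b ∈ B → ∀ ⦃y⦄, G.Adj b y → y ∈ B ∪ X
  twins : ∀ ⦃x⦄, x ∈ X → ∀ ⦃x'⦄, x' ∈ X → ∀ ⦃u⦄, u ∉ B → G.Adj x u → G.Adj x' u

namespace IsBlock

variable {B X : Set V} {p : ℕ → V} {n : ℕ}

theorem notMem_of_mem_terminals (hB : IsBlock G T B X) {x : V} (hx : x ∈ T) : x ∉ B :=
  fun hxB => disjoint_left.1 hB.disjoint hxB hx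

theorem mem_boundary_of_mem_terminals (hB : IsBlock G T B X) {x : V} (hx : x ∈ B ∪ X)
    (hxT : x ∈ T) : x ∈ X :=
  hx.resolve_left (hB.notMem_of_mem_terminals hxT)

theorem mem_boundary_of_adj (hB : IsBlock G T B X) {w y : V} (hw : w ∉ B ∪ X) (hy : y ∈ B ∪ X)
    (hwy : G.Adj w y) : y ∈ X :=
  hy.resolve_left fun hyB => hw (hB.adj_mem hyB hwy.symm)

/-- If `p j` is the first vertex after `p i` outside the block, then `p j ∈ X`. Going back from
`p i`, a vertex of `X` before `p i` has no neighbour outside the block on the path, because such a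
neighbour would also be adjacent to `p j`. -/
theorem mem_of_le_of_path (hB : IsBlock G T B X) (hp : IsInducedPath G p n) (hₙ : p n ∉ B) {i : ℕ}
    (hi : i ≤ n) (hiB : p i ∈ B) {k : ℕ} (hk : k ≤ i) : p k ∈ B ∪ X := by
  obtain ⟨j, hij, hjn, hjX⟩ : ∃ j, i < j ∧ j ≤ n ∧ p j ∈ X := by
    by_contra! hX
    have hB' : ∀ j, i ≤ j → j ≤ n → p j ∈ B := fun j hij => by
      induction j, hij using Nat.le_induction with
      | base => exact fun _ => hiB
      | succ j hij ih =>
        exact fun hjn => (hB.adj_mem (ih (by omega)) (hp.adj_succ hjn)).resolve_right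
          (hX _ (by omega) hjn)
    exact hₙ (hB' n hi le_rfl)
  induction hk using Nat.decreasingInduction with
  | self => exact Or.inl hiB
  | of_succ k hki ih =>
    have hadj : G.Adj (p (k + 1)) (p k) := (hp.adj_succ (by omega)).symm
    rcases ih with hB' | hX'
    · exact hB.adj_mem hB' hadj
    · by_contra hk
      have := (hp.adj_iff hjn (by omega)).1
        (hB.twins hX' hjX (fun hkB => hk (Or.inl hkB)) hadj)
      omega

theorem mapsTo_of_path (hB : IsBlock G T B X) (hp : IsInducedPath G p n) (h₀ : p 0 ∉ B)
    (hₙ : p n ∉ B) {i : ℕ} (hi : i ≤ n) (hiB : p i ∈ B) : MapsTo p (Iic n) (B ∪ X) := by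
  intro k hk
  rcases le_total k i with hki | hik
  · exact hB.mem_of_le_of_path hp hₙ hi hiB hki
  · have hmem := hB.mem_of_le_of_path hp.reverse (i := n - i) (k := n - k)
      (by rwa [Nat.sub_self]) (n.sub_le i) (by rwa [Nat.sub_sub_self hi]) (by omega)
    rwa [Nat.sub_sub_self hk] at hmem

theorem exists_path_of_cycle (hB : IsBlock G T B X) {C : Set V} (hC : IsInducedCycle G C (n + 2))
    {u : V} (hu : u ∈ C) (huBX : u ∉ B ∪ X) {b : V} (hb : b ∈ C) (hbB : b ∈ B) :
    ∃ p, IsInducedPath G p n ∧ C = insert u (p '' Iic n) ∧ MapsTo p (Iic n) (B ∪ X) ∧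
      p 0 ∈ X ∧ p n ∈ X ∧ (∀ x ∈ X, G.Adj u x) ∧ ∀ i ≤ n, p i ∈ X → i = 0 ∨ i = n := by
  obtain ⟨p, hp, -, rfl, hup⟩ := hC.exists_path hu
  have hu₀ : G.Adj u (p 0) := (hup 0 n.zero_le).2 (.inl rfl)
  have huₙ : G.Adj u (p n) := (hup n le_rfl).2 (.inr rfl)
  obtain ⟨i, hi, rfl⟩ : b ∈ p '' Iic n :=
    hb.resolve_left fun hbu => huBX (Or.inl (hbu ▸ hbB))
  have hpBX := hB.mapsTo_of_path hp (fun h => huBX (hB.adj_mem h hu₀.symm))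
    (fun h => huBX (hB.adj_mem h huₙ.symm)) hi hbB
  have h₀ : p 0 ∈ X := hB.mem_boundary_of_adj huBX (hpBX n.zero_le) hu₀
  have hXu : ∀ x ∈ X, G.Adj u x := fun x hx =>
    (hB.twins h₀ hx (fun h => huBX (Or.inl h)) hu₀.symm).symm
  exact ⟨p, hp, rfl, hpBX, h₀, hB.mem_boundary_of_adj huBX (hpBX self_mem_Iic) huₙ, hXu,
    fun i hi hiX => (hup i hi).1 (hXu _ hiX)⟩

theorem encard_cycle_inter_neighborSet_le_two (hB : IsBlock G T B X)
    (htri : ∀ a b c, G.Adj a b → G.Adj b c → ¬ G.Adj a c) (h : IsCleanOn G X (B ∪ X)) {C : Set V}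
    (hC : IsInducedCycle G C (n + 2)) {u : V} (hu : u ∈ C) (huBX : u ∉ B ∪ X) {b : V} (hb : b ∈ C)
    (hbB : b ∈ B) {w : V} (hwC : w ∉ C) : (C ∩ G.neighborSet w).encard ≤ 2 := by
  obtain ⟨p, hp, rfl, hpBX, h₀, hₙ, hXu, hends⟩ := hB.exists_path_of_cycle hC hu huBX hb hbB
  have hwp : w ∉ p '' Iic n := fun hwp => hwC (Or.inr hwp)
  by_cases hwB : w ∈ B
  · have hwu : u ∉ G.neighborSet w := fun hwu => huBX (hB.adj_mem hwB hwu)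
    rw [insert_inter_of_notMem hwu]
    exact h.fan_le_two hp hpBX h₀ hₙ (Or.inl hwB) hwp
  by_cases hwX : w ∈ X
  · have hwu : u ∈ G.neighborSet w := (hXu w hwX).symm
    have hsub := h.subsingleton_inter_neighborSet hp hpBX h₀ hₙ (Or.inr hwX) hwX hwp
    rw [insert_inter_of_mem hwu]
    exact (encard_insert_le _ _).trans
      ((add_le_add_left (encard_le_one_iff_subsingleton.2 hsub) 1).trans one_add_one_eq_two.le)
  have hX : ∀ i ≤ n, G.Adj w (p i) → p i ∈ X := fun i hi =>
    hB.mem_boundary_of_adj (fun hw => hw.elim hwB hwX) (hpBX hi)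
  by_cases hwu : u ∈ G.neighborSet w
  · refine encard_le_two_of_subset_pair (a := u) (b := u) ?_
    rintro _ ⟨rfl | ⟨i, hi, rfl⟩, hwi⟩
    exacts [Or.inl rfl, (htri _ _ _ hwu (hXu _ (hX i hi hwi)) hwi).elim]
  · rw [insert_inter_of_notMem hwu]
    refine encard_le_two_of_subset_pair (a := p 0) (b := p n) ?_
    rintro _ ⟨⟨i, hi, rfl⟩, hwi⟩
    rcases hends i hi (hX i hi hwi) with rfl | rfl
    exacts [Or.inl rfl, Or.inr rfl]

end IsBlock

section blocks

variable {ι : Type*} {B X : ι → Set V} {p : ℕ → V} {n : ℕ}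

theorem mem_terminals_of_adj_block (hB : ∀ s, IsBlock G T (B s) (X s)) {w y : V}
    (hw : w ∈ ⋃ s, B s) (hy : y ∉ ⋃ s, B s) (hwy : G.Adj w y) : y ∈ T := by
  obtain ⟨s, hs⟩ := mem_iUnion.1 hw
  exact (hB s).subset (((hB s).adj_mem hs hwy).resolve_left fun h => hy (mem_iUnion.2 ⟨s, h⟩))

theorem mapsTo_core_or_block (hB : ∀ s, IsBlock G T (B s) (X s)) (hp : IsInducedPath G p n)
    (h₀ : p 0 ∈ T) (hₙ : p n ∈ T) :
    MapsTo p (Iic n) (⋃ s, B s)ᶜ ∨ ∃ s, MapsTo p (Iic n) (B s ∪ X s) := by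
  refine or_iff_not_imp_left.2 fun hpB => ?_
  simp only [MapsTo, not_forall, mem_compl_iff, not_not, mem_iUnion] at hpB
  obtain ⟨i, hi, s, his⟩ := hpB
  exact ⟨s, (hB s).mapsTo_of_path hp ((hB s).notMem_of_mem_terminals h₀)
    ((hB s).notMem_of_mem_terminals hₙ) hi his⟩

namespace IsCleanOn

theorem triangle_free_of_blocks (hB : ∀ s, IsBlock G T (B s) (X s))
    (hcore : IsCleanOn G T (⋃ s, B s)ᶜ) (hblock : ∀ s, IsCleanOn G (X s) (B s ∪ X s)) :
    ∀ a b c, G.Adj a b → G.Adj b c → ¬ G.Adj a c := by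
  have triangle_free_at : ∀ a ∈ ⋃ s, B s, ∀ b c, G.Adj a b → G.Adj b c → ¬ G.Adj a c :=
    fun a ha b c hab hbc hac => by
      obtain ⟨s, ha⟩ := mem_iUnion.1 ha
      exact (hblock s).triangle_free (Or.inl ha) ((hB s).adj_mem ha hab) ((hB s).adj_mem ha hac)
        hab hbc hac
  intro a b c hab hbc hac
  exact hcore.triangle_free (fun ha => triangle_free_at a ha b c hab hbc hac)
    (fun hb => triangle_free_at b hb a c hab.symm hac hbc)
    (fun hc => triangle_free_at c hc a b hac.symm hab hbc.symm) hab hbc hac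

theorem fan_le_two_of_blocks (hB : ∀ s, IsBlock G T (B s) (X s))
    (hcore : IsCleanOn G T (⋃ s, B s)ᶜ) (hblock : ∀ s, IsCleanOn G (X s) (B s ∪ X s))
    (hp : IsInducedPath G p n) (h₀ : p 0 ∈ T) (hₙ : p n ∈ T) {w : V} (hwp : w ∉ p '' Iic n) :
    (p '' Iic n ∩ G.neighborSet w).encard ≤ 2 := by
  obtain hpcore | ⟨s, hps⟩ := mapsTo_core_or_block hB hp h₀ hₙ
  · by_cases hw : w ∈ ⋃ s, B s
    · refine (encard_le_encard ?_).trans (hcore.encard_path_inter_le_two hp hpcore)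
      exact fun y hy =>
        ⟨hy.1, mem_terminals_of_adj_block hB hw (hpcore.image_subset hy.1) hy.2⟩
    · exact hcore.fan_le_two hp hpcore h₀ hₙ hw hwp
  · by_cases hw : w ∈ B s ∪ X s
    · exact (hblock s).fan_le_two hp hps
        ((hB s).mem_boundary_of_mem_terminals (hps n.zero_le) h₀)
        ((hB s).mem_boundary_of_mem_terminals (hps self_mem_Iic) hₙ) hw hwp
    · refine (encard_le_encard ?_).trans ((hblock s).encard_path_inter_le_two hp hps)
      exact fun y hy => ⟨hy.1, (hB s).mem_boundary_of_adj hw (hps.image_subset hy.1) hy.2⟩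

theorem wheel_le_two_of_blocks (hB : ∀ s, IsBlock G T (B s) (X s))
    (hcore : IsCleanOn G T (⋃ s, B s)ᶜ) (hblock : ∀ s, IsCleanOn G (X s) (B s ∪ X s)) {C : Set V}
    (hC : IsInducedCycle G C (n + 2)) (hn : 2 ≤ n) {w : V} (hwC : w ∉ C) :
    (C ∩ G.neighborSet w).encard ≤ 2 := by
  by_cases hCcore : C ⊆ (⋃ s, B s)ᶜ
  · by_cases hw : w ∈ ⋃ s, B s
    · refine (encard_le_encard ?_).trans (hcore.encard_cycle_inter_le_two hC hCcore)
      exact fun y hy => ⟨hy.1, mem_terminals_of_adj_block hB hw (hCcore hy.1) hy.2⟩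
    · exact hcore.wheel_le_two hC hn hCcore hw hwC
  obtain ⟨s, b, hb, hbs⟩ : ∃ s, ∃ b ∈ C, b ∈ B s := by simpa [not_subset] using hCcore
  by_cases hCs : C ⊆ B s ∪ X s
  · by_cases hw : w ∈ B s ∪ X s
    · exact (hblock s).wheel_le_two hC hn hCs hw hwC
    · refine (encard_le_encard ?_).trans ((hblock s).encard_cycle_inter_le_two hC hCs)
      exact fun y hy => ⟨hy.1, (hB s).mem_boundary_of_adj hw (hCs hy.1) hy.2⟩
  · obtain ⟨u, hu, hus⟩ := not_subset.1 hCs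
    exact (hB s).encard_cycle_inter_neighborSet_le_two
      (triangle_free_of_blocks hB hcore hblock) (hblock s) hC hu hus hb hbs hwC

theorem join (hB : ∀ s, IsBlock G T (B s) (X s)) (hcore : IsCleanOn G T (⋃ s, B s)ᶜ)
    (hblock : ∀ s, IsCleanOn G (X s) (B s ∪ X s)) : IsCleanOn G T univ where
  triangle_free a _ b _ c _ := triangle_free_of_blocks hB hcore hblock a b c
  stable a _ haT b _ hbT := by
    have mem_core : ∀ x ∈ T, x ∈ (⋃ s, B s)ᶜ := fun x hx hxB =>
      let ⟨s, hs⟩ := mem_iUnion.1 hxB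
      (hB s).notMem_of_mem_terminals hx hs
    exact hcore.stable (mem_core a haT) haT (mem_core b hbT) hbT
  inner_notMem p n hp _ h₀ hₙ j hj hjn hjT := by
    obtain hpcore | ⟨s, hps⟩ := mapsTo_core_or_block hB hp h₀ hₙ
    · exact hcore.inner_notMem hp hpcore h₀ hₙ hj hjn hjT
    · exact (hblock s).inner_notMem hp hps
        ((hB s).mem_boundary_of_mem_terminals (hps n.zero_le) h₀)
        ((hB s).mem_boundary_of_mem_terminals (hps self_mem_Iic) hₙ) hj hjn
        ((hB s).mem_boundary_of_mem_terminals (hps hjn.le) hjT)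
  fan_le_two _ _ hp _ h₀ hₙ _ _ := fan_le_two_of_blocks hB hcore hblock hp h₀ hₙ
  wheel_le_two _ _ hC hn _ _ _ := wheel_le_two_of_blocks hB hcore hblock hC hn

end IsCleanOn

end blocks

/-! ### Burling graphs -/

section gStar

variable {P : GSPair} {S S' : P.S} {u v : P.V}

@[simp]
theorem gStar_adj_inl_inl : (GStar P).Adj (.inl u) (.inl v) ↔ P.G.Adj u v := by
  simp only [GStar, SimpleGraph.fromRel_adj, Sum.inl.injEq, reduceCtorEq]
  have := P.G.adj_comm u v
  have := P.G.ne_of_adj (a := u) (b := v)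
  aesop

@[simp]
theorem gStar_adj_inr_inl : (GStar P).Adj (.inr S) (.inl u) ↔ u ∈ (S : Set P.V) := by
  simp [GStar]

@[simp]
theorem gStar_adj_inl_inr : (GStar P).Adj (.inl u) (.inr S) ↔ u ∈ (S : Set P.V) := by
  rw [SimpleGraph.adj_comm, gStar_adj_inr_inl]

@[simp]
theorem not_gStar_adj_inr_inr : ¬ (GStar P).Adj (.inr S) (.inr S') := by
  simp [GStar]

end gStar

/-- The vertices of `GStar (NEXT P)`: those of `NEXT P` (`orig`, `copy` and `new`), and for all `s`
and `t` one vertex `unionTerminal s t` for the stable set `S ∪ T` and one vertex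
`insertTerminal s t` for `S ∪ {v_{S,T}}`. Unlike in `GStar (NEXT P)`, equal stable sets with
different indices give different vertices. -/
inductive NextVertex (P : GSPair)
  | orig (u : P.V)
  | copy (s : P.S) (u : P.V)
  | new (s t : P.S)
  | unionTerminal (s t : P.S)
  | insertTerminal (s t : P.S)

namespace NextVertex

variable {P : GSPair}

/-- `GStar (NEXT P)` with one vertex per index, rather than per element, of `(NEXT P).S`. -/
def graph (P : GSPair) : SimpleGraph (NextVertex P) where
  Adj
    | orig u, orig v => P.G.Adj u v
    | copy s u, copy s' v => s = s' ∧ P.G.Adj u v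
    | new s t, copy s' u | copy s' u, new s t => s = s' ∧ u ∈ (t : Set P.V)
    | unionTerminal s _, orig u | orig u, unionTerminal s _ => u ∈ (s : Set P.V)
    | unionTerminal s t, copy s' u | copy s' u, unionTerminal s t => s = s' ∧ u ∈ (t : Set P.V)
    | insertTerminal s _, orig u | orig u, insertTerminal s _ => u ∈ (s : Set P.V)
    | insertTerminal s t, new s' t' | new s' t', insertTerminal s t => s = s' ∧ t = t'
    | _, _ => False
  symm := ⟨by rintro (_ | _ | _ | _ | _) (_ | _ | _ | _ | _) <;> simp_all [SimpleGraph.adj_comm]⟩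
  loopless := ⟨by rintro (_ | _ | _ | _ | _) <;> simp⟩

/-- The vertices standing for the stable sets of `NEXT P`. -/
def terminals (P : GSPair) : Set (NextVertex P) :=
  {a | (∃ s t, a = unionTerminal s t) ∨ ∃ s t, a = insertTerminal s t}

/-- The copy `H_s` of `P` together with the vertices `v_{s,t}` attached to it. -/
def block (s : P.S) : Set (NextVertex P) :=
  range (copy s) ∪ range (new s)

/-- The terminals with first index `s`, along which `block s` is attached to the rest. -/
def boundary (s : P.S) : Set (NextVertex P) :=
  range (unionTerminal s) ∪ range (insertTerminal s)

theorem isBlock (s : P.S) : IsBlock (graph P) (terminals P) (block s) (boundary s) where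
  subset := by
    rintro _ (⟨t, rfl⟩ | ⟨t, rfl⟩)
    exacts [Or.inl ⟨s, t, rfl⟩, Or.inr ⟨s, t, rfl⟩]
  disjoint := by
    rw [disjoint_left]
    rintro _ (⟨_, rfl⟩ | ⟨_, rfl⟩) <;> simp [terminals]
  adj_mem := by
    rintro _ (⟨_, rfl⟩ | ⟨_, rfl⟩) (_ | _ | _ | _ | _) <;>
      simp +contextual [graph, block, boundary]
  twins := by
    rintro _ (⟨_, rfl⟩ | ⟨_, rfl⟩) _ (⟨_, rfl⟩ | ⟨_, rfl⟩) (_ | _ | _ | _ | _) <;>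
      simp +contextual [graph, block]

theorem compl_iUnion_block_subset :
    (⋃ s : P.S, block s)ᶜ ⊆ range orig ∪ terminals P := by
  rintro (u | ⟨s, u⟩ | ⟨s, t⟩ | ⟨s, t⟩ | ⟨s, t⟩) ha
  · exact Or.inl ⟨u, rfl⟩
  · exact (ha (mem_iUnion.2 ⟨s, Or.inl ⟨u, rfl⟩⟩)).elim
  · exact (ha (mem_iUnion.2 ⟨s, Or.inr ⟨t, rfl⟩⟩)).elim
  · exact Or.inr (Or.inl ⟨s, t, rfl⟩)
  · exact Or.inr (Or.inr ⟨s, t, rfl⟩)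

/-- Maps the vertices outside all blocks to `GStar P`, identifying the terminals with the same
`s`. -/
def toCore : NextVertex P → P.V ⊕ P.S
  | orig u | copy _ u => .inl u
  | new s _ | unionTerminal s _ | insertTerminal s _ => .inr s

theorem isCleanOn_core (h : IsCleanOn (GStar P) (range Sum.inr) univ) :
    IsCleanOn (graph P) (terminals P) (⋃ s, block s)ᶜ := by
  refine h.comap toCore (mapsTo_univ _ _) ?_ ?_
  · rintro _ ⟨⟨s, t, rfl⟩ | ⟨s, t, rfl⟩, -⟩ <;> exact ⟨s, rfl⟩
  · intro a ha b hb
    obtain ⟨_, rfl⟩ | ⟨_, _, rfl⟩ | ⟨_, _, rfl⟩ := compl_iUnion_block_subset ha <;>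
      obtain ⟨_, rfl⟩ | ⟨_, _, rfl⟩ | ⟨_, _, rfl⟩ := compl_iUnion_block_subset hb <;>
      simp [graph, toCore]

/-- Maps the block of `s` and the terminals `unionTerminal s t` to `GStar P`, identifying
`unionTerminal s t` with `new s t`. -/
def toCopy : NextVertex P → P.V ⊕ P.S
  | orig u | copy _ u => .inl u
  | new _ t | unionTerminal _ t | insertTerminal _ t => .inr t

theorem isCleanOn_copy (h : IsCleanOn (GStar P) (range Sum.inr) univ) (s : P.S) :
    IsCleanOn (graph P) (range (new s) ∪ range (unionTerminal s))
      (block s ∪ range (unionTerminal s)) := by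
  refine h.comap toCopy (mapsTo_univ _ _) ?_ ?_
  · rintro _ ⟨⟨t, rfl⟩ | ⟨t, rfl⟩, -⟩ <;> exact ⟨t, rfl⟩
  · rintro _ ((⟨_, rfl⟩ | ⟨_, rfl⟩) | ⟨_, rfl⟩) _ ((⟨_, rfl⟩ | ⟨_, rfl⟩) | ⟨_, rfl⟩) <;>
      simp [graph, toCopy]

theorem isCleanOn_block (h : IsCleanOn (GStar P) (range Sum.inr) univ) (s : P.S) :
    IsCleanOn (graph P) (boundary s) (block s ∪ boundary s) := by
  rw [boundary, ← union_assoc]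
  refine (isCleanOn_copy h s).pendant ?_ ?_
  · rintro _ ⟨t, rfl⟩
    refine ⟨new s t, ⟨Or.inl ⟨t, rfl⟩, Or.inl (Or.inr ⟨t, rfl⟩)⟩, by simp, ?_⟩
    rintro _ (((⟨_, rfl⟩ | ⟨_, rfl⟩) | ⟨_, rfl⟩) | ⟨_, rfl⟩) <;> simp [graph, eq_comm]
  · rintro a (ha | ha)
    exacts [Or.inr (Or.inr ha), Or.inl ha]

theorem isCleanOn_graph (h : IsCleanOn (GStar P) (range Sum.inr) univ) :
    IsCleanOn (graph P) (terminals P) univ :=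
  .join isBlock (isCleanOn_core h) (isCleanOn_block h)

/-- The identification of the vertices of `NEXT P` with the `orig`, `copy` and `new` vertices. -/
def ofNext : (NEXT P).V → NextVertex P
  | .inl u => orig u
  | .inr (.inl (s, u)) => copy s u
  | .inr (.inr (s, t)) => new s t

theorem next_adj_iff (u v : (NEXT P).V) :
    (NEXT P).G.Adj u v ↔ (graph P).Adj (ofNext u) (ofNext v) := by
  rcases u with u | ⟨s, u⟩ | ⟨s, t⟩ <;> rcases v with v | ⟨s', v⟩ | ⟨s', t'⟩ <;>
    simp only [NEXT, graph, ofNext, SimpleGraph.fromRel_adj] <;>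
    grind [SimpleGraph.adj_comm, SimpleGraph.irrefl]

theorem mem_union_iff_adj_unionTerminal (s t : P.S) (v : P.V ⊕ ((P.S × P.V) ⊕ (P.S × P.S))) :
    v ∈ Sum.inl '' (s : Set P.V) ∪ (fun u => Sum.inr (Sum.inl (s, u))) '' (t : Set P.V) ↔
      (graph P).Adj (unionTerminal s t) (ofNext v) := by
  rcases v with u | ⟨s', u⟩ | ⟨s', t'⟩ <;> simp [graph, ofNext, and_comm]

theorem mem_insert_iff_adj_insertTerminal (s t : P.S) (v : P.V ⊕ ((P.S × P.V) ⊕ (P.S × P.S))) :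
    v ∈ insert (Sum.inr (Sum.inr (s, t))) (Sum.inl '' (s : Set P.V)) ↔
      (graph P).Adj (insertTerminal s t) (ofNext v) := by
  rcases v with u | ⟨s', u⟩ | ⟨s', t'⟩ <;> simp [graph, ofNext, eq_comm]

theorem exists_terminal_of_mem_next (A : (NEXT P).S) :
    ∃ a ∈ terminals P, ∀ v, v ∈ (A : Set (NEXT P).V) ↔ (graph P).Adj a (ofNext v) := by
  obtain ⟨_, s, t, rfl | rfl⟩ := A
  · exact ⟨unionTerminal s t, Or.inl ⟨s, t, rfl⟩, mem_union_iff_adj_unionTerminal s t⟩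
  · exact ⟨insertTerminal s t, Or.inr ⟨s, t, rfl⟩, mem_insert_iff_adj_insertTerminal s t⟩

end NextVertex

theorem IsCleanOn.gStar_next {P : GSPair} (h : IsCleanOn (GStar P) (range Sum.inr) univ) :
    IsCleanOn (GStar (NEXT P)) (range Sum.inr) univ := by
  choose code hterminal hcode using NextVertex.exists_terminal_of_mem_next (P := P)
  have hclean := NextVertex.isCleanOn_graph h
  refine hclean.comap (Sum.elim NextVertex.ofNext code) (mapsTo_univ _ _) ?_ ?_
  · rintro _ ⟨⟨A, rfl⟩, -⟩
    exact hterminal A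
  · rintro (u | A) - (v | A') -
    · rw [gStar_adj_inl_inl]
      exact NextVertex.next_adj_iff u v
    · rw [gStar_adj_inl_inr, SimpleGraph.adj_comm]
      exact hcode A' u
    · rw [gStar_adj_inr_inl]
      exact hcode A v
    · exact iff_of_false not_gStar_adj_inr_inr
        (hclean.stable trivial (hterminal A) trivial (hterminal A'))

theorem isCleanOn_gStar_burlingPair (k : ℕ) :
    IsCleanOn (GStar (BurlingPair k)) (range Sum.inr) univ := by
  induction k with
  | zero =>
    refine .of_encard_le_two ?_ ?_
    · change encard (univ : Set (Unit ⊕ ({univ} : Set (Set Unit)))) ≤ 2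
      rw [encard_univ, ENat.card_sum]
      simp [one_add_one_eq_two]
    · rintro _ ⟨⟨⟨A, hA⟩, rfl⟩, -⟩ _ ⟨⟨⟨B, hB⟩, rfl⟩, -⟩
      obtain rfl : A = univ := hA
      obtain rfl : B = univ := hB
      rfl
  | succ k ih => exact ih.gStar_next

/-- **Theorem (Davies).** For every positive integer `k`, the `k`-th Burling graph contains
no induced wheel. -/
theorem burling_no_induced_wheel (k : ℕ) (hk : 0 < k)
    (s : Set (BurlingPair (k - 1)).V) :
    ¬ IsWheel ((BurlingPair (k - 1)).G.induce s) := by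
  have hclean : IsCleanOn ((BurlingPair (k - 1)).G.induce s) ∅ univ :=
    (isCleanOn_gStar_burlingPair (k - 1)).comap (fun v => .inl v.1) (mapsTo_univ _ _)
      (fun _ hv => hv.1.elim) fun _ _ _ _ => gStar_adj_inl_inl.symm
  exact hclean.not_isWheel
end

section
/- For every positive integer k, there exists a triangle-free graph G that contains no induced wheel and has chromatic number at least k. -/
universe u

/-!
Every Burling graph carries a strict partial order and an acyclic orientation of its edges that
interact through three simple axioms, and these axioms pass to induced subgraphs. They rule out
triangles, and they force every induced cycle of length at least 4 to have a unique pivot: a vertex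
that is above, or an out-neighbour of, each other vertex of the cycle. The other vertices of the
cycle form an antichain, in which every vertex has at most one out-neighbour. The hub `w` of a wheel
would have to lie below the pivot, so that it has three neighbours on the remaining path. Since
out-degrees are at most one, the path contains a directed path from one of the outer two neighbours
to the middle one. Its second vertex lies below `w` (otherwise there would be a directed cycle), and
so does everything after it, by the axioms; but a neighbour of `w` cannot lie below `w`.

The chromatic number grows because in every colouring some distinguished stable set, an upward
closed chain of the order, receives one more colour at each step of the construction.
-/

open SimpleGraph Relation Set

theorem transGen_or_transGen_of_path_without_source {r : ℕ → ℕ → Prop} {i j k : ℕ}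
    (hij : i < j) (hjk : j < k)
    (hedge : ∀ l, i ≤ l → l < k → r l (l + 1) ∨ r (l + 1) l)
    (hsource : ∀ l, i ≤ l → l + 1 < k → r (l + 1) l → ¬ r (l + 1) (l + 2)) :
    TransGen r i j ∨ TransGen r k j := by
  have back_of_back : ∀ {l m}, i ≤ l → l ≤ m → m < k → r (l + 1) l → r (m + 1) m := by
    intro l m hil hlm hmk hl
    induction m, hlm using Nat.le_induction with
    | base => exact hl
    | succ m hlm ih =>
      have hm := ih (by omega)
      exact (hedge (m + 1) (by omega) hmk).resolve_left (hsource m (by omega) hmk hm)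
  by_cases h : ∃ l, i ≤ l ∧ l < j ∧ r (l + 1) l
  · obtain ⟨l, hil, hlj, hl⟩ := h
    refine .inr (transGen_of_succ_of_gt r (fun m hm => ?_) hjk)
    exact back_of_back hil (hlj.le.trans hm.1) hm.2 hl
  · push Not at h
    refine .inl (transGen_of_succ_of_lt r (fun m hm => ?_) hij)
    exact (hedge m hm.1 (hm.2.trans hjk)).resolve_right (h m hm.1 hm.2)

theorem exists_lt_lt_of_three_le_ncard {α : Type*} [LinearOrder α] {s : Set α}
    (h : 3 ≤ s.ncard) : ∃ i ∈ s, ∃ j ∈ s, ∃ k ∈ s, i < j ∧ j < k := by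
  have hs : s.Finite := finite_of_ncard_ne_zero (by omega)
  rw [ncard_eq_toFinset_card s hs] at h
  have hmem (a : Fin 3) : hs.toFinset.orderEmbOfCardLe h a ∈ s :=
    hs.mem_toFinset.1 (Finset.orderEmbOfCardLe_mem _ h a)
  exact ⟨_, hmem 0, _, hmem 1, _, hmem 2, by simp, by simp⟩

theorem cycleGraph_adj_iff_val {n : ℕ} (hn : 2 ≤ n) (i j : Fin n) :
    (cycleGraph n).Adj i j ↔ i.val + 1 = j.val ∨ j.val + 1 = i.val ∨
      (i.val = 0 ∧ j.val + 1 = n) ∨ (j.val = 0 ∧ i.val + 1 = n) := by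
  rw [cycleGraph_adj']
  rcases lt_trichotomy i j with h | rfl | h
  · rw [Fin.coe_sub_iff_lt.2 h, Fin.coe_sub_iff_le.2 h.le]
    omega
  · rw [Fin.coe_sub_iff_le.2 le_rfl]
    omega
  · rw [Fin.coe_sub_iff_lt.2 h, Fin.coe_sub_iff_le.2 h.le]
    omega

theorem exists_cycleGraph_embedding_zero_eq {V : Type*} {G : SimpleGraph V} {n : ℕ} [NeZero n]
    (φ : cycleGraph n ↪g G) (p : Fin n) :
    ∃ ψ : cycleGraph n ↪g G, ψ 0 = φ p ∧ range ψ = range φ := by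
  let rotate : cycleGraph n ≃g cycleGraph n :=
    { toEquiv := Equiv.addRight p, map_rel_iff' := by simp [cycleGraph_adj'] }
  refine ⟨φ.comp rotate.toEmbedding, congrArg φ (zero_add p), ?_⟩
  exact rotate.surjective.range_comp φ

theorem IsWheel.exists_cycleGraph_embedding {V : Type*} {G : SimpleGraph V} (h : IsWheel G) :
    ∃ (w : V) (n : ℕ) (φ : cycleGraph n ↪g G),
      4 ≤ n ∧ range φ = {w}ᶜ ∧ 3 ≤ (G.neighborSet w).ncard := by
  obtain ⟨w, n, hn, ⟨e⟩, hw⟩ := h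
  refine ⟨w, n, (Embedding.induce {u | u ≠ w}).comp e.symm.toEmbedding, hn, ?_, hw⟩
  ext u
  constructor
  · rintro ⟨i, rfl⟩
    exact (e.symm i).2
  · intro hu
    exact ⟨e ⟨u, hu⟩, congrArg Subtype.val (e.symm_apply_apply ⟨u, hu⟩)⟩

/-- A Burling structure on `G`, after the Burling sets of Pournajafi and Trotignon: a strict partial
order `lt` on the vertices together with an acyclic orientation `arc` of the edges. Acyclicity is
encoded as well-foundedness, which is the same thing for finite graphs. Their axiom that elements
with a common lower bound are comparable is left out. -/
structure IsBurling {V : Type*} (G : SimpleGraph V) (lt arc : V → V → Prop) : Prop where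
  adj_iff : ∀ {x y}, G.Adj x y ↔ arc x y ∨ arc y x
  lt_irrefl : ∀ x, ¬ lt x x
  lt_trans : ∀ {x y z}, lt x y → lt y z → lt x z
  wellFounded : WellFounded arc
  lt_or_lt_of_arc_of_arc : ∀ {x y z}, arc x y → arc x z → y ≠ z → lt y z ∨ lt z y
  lt_of_arc_of_lt : ∀ {x y z}, arc x y → lt x z → lt y z
  lt_or_arc_of_arc_of_lt : ∀ {x y z}, arc x y → lt y z → lt x z ∨ arc x z

/-- A vertex `z` is a pivot of the vertex set `C` of a cycle if every other vertex of `C` lies below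
`z` or has an arc to `z`. -/
def IsPivot {V : Type*} (lt arc : V → V → Prop) (C : Set V) (z : V) : Prop :=
  ∀ x ∈ C, x ≠ z → lt x z ∨ arc x z

namespace IsBurling

variable {V : Type*} {G : SimpleGraph V} {lt arc : V → V → Prop} {x y z w : V}

theorem lt_or_arc_of_adj_of_lt (h : IsBurling G lt arc) (hxy : G.Adj x y) (hyz : lt y z) :
    lt x z ∨ arc x z :=
  (h.adj_iff.1 hxy).elim (h.lt_or_arc_of_arc_of_lt · hyz) fun hyx =>
    .inl (h.lt_of_arc_of_lt hyx hyz)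

theorem not_lt_of_adj (h : IsBurling G lt arc) (hxy : G.Adj x y) : ¬ lt x y := by
  intro hlt
  rcases h.lt_or_arc_of_adj_of_lt hxy.symm hlt with hyy | hyy
  · exact h.lt_irrefl y hyy
  · exact h.wellFounded.irrefl.irrefl y hyy

theorem not_adj_of_arc_of_arc (h : IsBurling G lt arc) (hxy : arc x y) (hxz : arc x z) :
    ¬ G.Adj y z := by
  intro hyz
  rcases h.lt_or_lt_of_arc_of_arc hxy hxz hyz.ne with hlt | hlt
  · exact h.not_lt_of_adj hyz hlt
  · exact h.not_lt_of_adj hyz.symm hlt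

theorem cliqueFree_three (h : IsBurling G lt arc) : G.CliqueFree 3 := by
  classical
  intro t ht
  obtain ⟨x, y, z, hxy, hxz, hyz, -⟩ := is3Clique_iff.1 ht
  rcases h.adj_iff.1 hxy with xy | yx <;> rcases h.adj_iff.1 hxz with xz | zx <;>
    rcases h.adj_iff.1 hyz with yz | zy
  · exact h.not_adj_of_arc_of_arc xy xz hyz
  · exact h.not_adj_of_arc_of_arc xy xz hyz
  · exact h.wellFounded.asymmetric₃ _ _ _ xy yz zx
  · exact h.not_adj_of_arc_of_arc zx zy hxy
  · exact h.not_adj_of_arc_of_arc yx yz hxz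
  · exact h.wellFounded.asymmetric₃ _ _ _ yx xz zy
  · exact h.not_adj_of_arc_of_arc yx yz hxz
  · exact h.not_adj_of_arc_of_arc zx zy hxy

theorem not_adj_of_adj_of_adj (h : IsBurling G lt arc) (hxy : G.Adj x y) (hxz : G.Adj x z) :
    ¬ G.Adj y z := by
  classical
  exact fun hyz => h.cliqueFree_three {x, y, z} (is3Clique_triple_iff.2 ⟨hxy, hxz, hyz⟩)

theorem induce (h : IsBurling G lt arc) (s : Set V) :
    IsBurling (G.induce s) (fun x y => lt x y) (fun x y => arc x y) where
  adj_iff := h.adj_iff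
  lt_irrefl x := h.lt_irrefl x
  lt_trans := h.lt_trans
  wellFounded := InvImage.wf Subtype.val h.wellFounded
  lt_or_lt_of_arc_of_arc hxy hxz hyz :=
    h.lt_or_lt_of_arc_of_arc hxy hxz (Subtype.coe_ne_coe.2 hyz)
  lt_of_arc_of_lt := h.lt_of_arc_of_lt
  lt_or_arc_of_arc_of_lt := h.lt_or_arc_of_arc_of_lt

theorem eq_of_isPivot {C : Set V} (h : IsBurling G lt arc) (hyC : y ∈ C) (hzC : z ∈ C)
    (hy : IsPivot lt arc C y) (hz : IsPivot lt arc C z) : y = z := by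
  by_contra hne
  rcases hy z hzC (Ne.symm hne) with hzy | hzy <;> rcases hz y hyC hne with hyz | hyz
  · exact h.lt_irrefl y (h.lt_trans hyz hzy)
  · exact h.not_lt_of_adj (h.adj_iff.2 (.inr hyz)) hzy
  · exact h.not_lt_of_adj (h.adj_iff.2 (.inr hzy)) hyz
  · exact h.wellFounded.asymmetric _ _ hyz hzy

section Antichain

variable {Q : Set V}

theorem eq_of_arc_of_arc (h : IsBurling G lt arc) (hQ : IsAntichain lt Q) (hy : y ∈ Q) (hz : z ∈ Q)
    (hxy : arc x y) (hxz : arc x z) : y = z := by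
  by_contra hne
  rcases h.lt_or_lt_of_arc_of_arc hxy hxz hne with hlt | hlt
  · exact hQ hy hz hne hlt
  · exact hQ hz hy (Ne.symm hne) hlt

theorem not_transGen_of_adj_of_adj (h : IsBurling G lt arc) (hQ : IsAntichain lt Q) (hw : w ∉ Q)
    (hwQ : ∀ q ∈ Q, ¬ lt w q) (hx : x ∈ Q) (hy : y ∈ Q) (hwx : G.Adj w x) (hwy : G.Adj w y) :
    ¬ TransGen (fun a b => b ∈ Q ∧ arc a b) x y := by
  intro hxy
  have arc_path : TransGen arc x y := TransGen.mono (fun _ _ => And.right) x y hxy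
  rcases h.adj_iff.1 hwx with wx | xw
  · rcases h.adj_iff.1 hwy with wy | yw
    · obtain rfl := h.eq_of_arc_of_arc hQ hx hy wx wy
      exact h.wellFounded.transGen.irrefl.irrefl x arc_path
    · exact h.wellFounded.transGen.asymmetric x y arc_path ((TransGen.single yw).tail wx)
  · obtain ⟨x', ⟨hx', xx'⟩, hx'y⟩ := TransGen.head'_iff.1 hxy
    have hx'w : lt x' w :=
      (h.lt_or_lt_of_arc_of_arc xw xx' (ne_of_mem_of_not_mem hx' hw).symm).resolve_left (hwQ x' hx')
    have hyw : lt y w := by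
      clear hy hwy hxy arc_path
      induction hx'y with
      | refl => exact hx'w
      | tail _ hab ih => exact h.lt_of_arc_of_lt hab.2 ih
    exact h.not_lt_of_adj hwy.symm hyw

end Antichain

section Hole

variable {n : ℕ}

theorem isPivot_zero_of_lt [NeZero n] (h : IsBurling G lt arc) (φ : cycleGraph n ↪g G) {u : Fin n}
    (hu : lt (φ u) (φ 0)) : IsPivot lt arc (range φ) (φ 0) := by
  have hu0 : u.val ≠ 0 := fun hu0 => h.lt_irrefl (φ 0) (by rwa [Fin.val_eq_zero_iff.1 hu0] at hu)
  have hun := u.isLt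
  have hn : 2 ≤ n := by omega
  have hu_adj : ¬ (cycleGraph n).Adj u 0 := fun hadj => h.not_lt_of_adj (φ.map_adj_iff.2 hadj) hu
  have step : ∀ i j, (cycleGraph n).Adj j i → ¬ (cycleGraph n).Adj i 0 →
      lt (φ i) (φ 0) ∨ arc (φ i) (φ 0) → lt (φ j) (φ 0) ∨ arc (φ j) (φ 0) := by
    intro i j hji hi0 hi
    refine h.lt_or_arc_of_adj_of_lt (φ.map_adj_iff.2 hji) (hi.resolve_right fun harc => ?_)
    exact hi0 (φ.map_adj_iff.1 (h.adj_iff.2 (.inl harc)))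
  simp only [cycleGraph_adj_iff_val hn, Fin.val_zero, true_and] at step hu_adj
  have above : ∀ i, u.val ≤ i → ∀ hi : i < n, lt (φ ⟨i, hi⟩) (φ 0) ∨ arc (φ ⟨i, hi⟩) (φ 0) := by
    intro i hui
    induction i, hui using Nat.le_induction with
    | base => exact fun _ => .inl hu
    | succ i hui ih =>
      exact fun hi => step ⟨i, by omega⟩ _ (by simp) (by dsimp only; omega)
        (ih (Nat.lt_of_succ_lt hi))
  have below : ∀ i, i ≤ u.val → ∀ hi : 1 ≤ i ∧ i < n,
      lt (φ ⟨i, hi.2⟩) (φ 0) ∨ arc (φ ⟨i, hi.2⟩) (φ 0) := by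
    intro i hiu
    induction hiu using Nat.decreasingInduction with
    | self => exact fun _ => .inl hu
    | of_succ i hiu ih =>
      exact fun hi => step ⟨i + 1, by omega⟩ _ (by simp) (by dsimp only; omega) (ih (by omega))
  rintro _ ⟨i, rfl⟩ hne
  have hi0 : i.val ≠ 0 := fun hi0 => hne (by rw [Fin.val_eq_zero_iff.1 hi0])
  rcases le_total u.val i.val with hui | hiu
  · exact above i hui i.isLt
  · exact below i hiu ⟨by omega, i.isLt⟩

theorem isPivot_of_lt (h : IsBurling G lt arc) (φ : cycleGraph n ↪g G) (hx : x ∈ range φ)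
    (hy : y ∈ range φ) (hxy : lt x y) : IsPivot lt arc (range φ) y := by
  obtain ⟨p, rfl⟩ := hy
  have : NeZero n := .of_pos p.pos
  obtain ⟨ψ, hψp, hψ⟩ := exists_cycleGraph_embedding_zero_eq φ p
  rw [← hψ] at hx ⊢
  rw [← hψp] at hxy ⊢
  obtain ⟨u, rfl⟩ := hx
  exact h.isPivot_zero_of_lt ψ hxy

theorem exists_isPivot (h : IsBurling G lt arc) (hn : 3 ≤ n) (φ : cycleGraph n ↪g G) :
    ∃ p, IsPivot lt arc (range φ) (φ p) := by
  obtain ⟨n, rfl⟩ := Nat.exists_eq_add_of_le' hn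
  obtain ⟨_, ⟨i, rfl⟩, hmin⟩ := h.wellFounded.has_min (range φ) (range_nonempty φ)
  have arc_of_adj : ∀ j, (cycleGraph (n + 3)).Adj i j → arc (φ i) (φ j) := fun j hij =>
    (h.adj_iff.1 (φ.map_adj_iff.2 hij)).resolve_right (hmin _ (mem_range_self j))
  obtain ⟨j, hij, k, hik, hjk⟩ :
      ∃ j, (cycleGraph (n + 3)).Adj i j ∧ ∃ k, (cycleGraph (n + 3)).Adj i k ∧ j ≠ k := by
    simp only [← mem_neighborFinset]
    rw [← Finset.one_lt_card, card_neighborFinset_eq_degree, cycleGraph_degree_three_le]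
    exact one_lt_two
  rcases h.lt_or_lt_of_arc_of_arc (arc_of_adj j hij) (arc_of_adj k hik) (φ.injective.ne hjk)
    with hlt | hlt
  · exact ⟨k, h.isPivot_of_lt φ (mem_range_self j) (mem_range_self k) hlt⟩
  · exact ⟨j, h.isPivot_of_lt φ (mem_range_self k) (mem_range_self j) hlt⟩

theorem isAntichain_diff_pivot (h : IsBurling G lt arc) (φ : cycleGraph n ↪g G)
    (hz : z ∈ range φ) (hpivot : IsPivot lt arc (range φ) z) :
    IsAntichain lt (range φ \ {z}) := by
  intro x hx y hy _ hxy
  exact hy.2 (h.eq_of_isPivot hy.1 hz (h.isPivot_of_lt φ hx.1 hy.1 hxy) hpivot)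

section Hub

variable {φ : cycleGraph n ↪g G} {i j k : Fin n}

theorem not_lt_of_isAntichain {Q : Set V} (h : IsBurling G lt arc) (hQ : IsAntichain lt Q)
    (hiQ : φ i ∈ Q) (hjQ : φ j ∈ Q) (hkQ : φ k ∈ Q) (hij : i < j) (hjk : j < k)
    (hi : G.Adj w (φ i)) (hj : G.Adj w (φ j)) (hk : G.Adj w (φ k)) {l : Fin n} (hlQ : φ l ∈ Q) :
    ¬ lt w (φ l) := by
  intro hw
  have adj_of_adj : ∀ m, φ m ∈ Q → G.Adj w (φ m) → (cycleGraph n).Adj m l := by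
    intro m hmQ hm
    rcases h.lt_or_arc_of_adj_of_lt hm.symm hw with hlt | harc
    · by_cases hml : φ m = φ l
      · exact (h.lt_irrefl _ (hml ▸ hlt)).elim
      · exact (hQ hmQ hlQ hml hlt).elim
    · exact φ.map_adj_iff.1 (h.adj_iff.2 (.inl harc))
  have hil := adj_of_adj i hiQ hi
  have hjl := adj_of_adj j hjQ hj
  have hkl := adj_of_adj k hkQ hk
  rw [cycleGraph_adj_iff_val (by omega)] at hil hjl hkl
  omega

variable [NeZero n]

theorem lt_pivot_of_adj (h : IsBurling G lt arc) (hpivot : IsPivot lt arc (range φ) (φ 0))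
    (hij : i < j) (hjk : j < k) (hi : G.Adj w (φ i)) (hj : G.Adj w (φ j)) (hk : G.Adj w (φ k)) :
    lt w (φ 0) := by
  by_contra hw
  have lt_of_not_adj : ∀ l, l ≠ 0 → ¬ G.Adj (φ l) (φ 0) → lt (φ l) (φ 0) := fun l hl hadj =>
    (hpivot _ (mem_range_self l) (φ.injective.ne hl)).resolve_right
      fun harc => hadj (h.adj_iff.2 (.inl harc))
  have arc_of_lt : ∀ l, G.Adj w (φ l) → lt (φ l) (φ 0) → arc w (φ l) := fun l hwl hlt =>
    (h.adj_iff.1 hwl).resolve_right fun harc => hw (h.lt_of_arc_of_lt harc hlt)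
  have hj0 : j ≠ 0 := ((Fin.zero_le i).trans_lt hij).ne'
  have hk0 : k ≠ 0 := ((Fin.zero_le j).trans_lt hjk).ne'
  have j_lt : lt (φ j) (φ 0) := by
    refine lt_of_not_adj j hj0 fun hadj => ?_
    have hj1 : i = 0 := by
      have hadj' := φ.map_adj_iff.1 hadj
      rw [cycleGraph_adj_iff_val (by omega), Fin.val_zero] at hadj'
      exact Fin.val_eq_zero_iff.1 (by omega)
    exact h.not_adj_of_adj_of_adj hj (hj1 ▸ hi) hadj
  have w_zero : arc w (φ 0) := (h.lt_or_arc_of_adj_of_lt hj j_lt).resolve_left hw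
  have k_lt : lt (φ k) (φ 0) :=
    lt_of_not_adj k hk0 (h.not_adj_of_adj_of_adj hk (h.adj_iff.2 (.inl w_zero)))
  have hQ := h.isAntichain_diff_pivot φ (mem_range_self 0) hpivot
  exact hjk.ne (φ.injective (h.eq_of_arc_of_arc hQ ⟨mem_range_self j, φ.injective.ne hj0⟩
    ⟨mem_range_self k, φ.injective.ne hk0⟩ (arc_of_lt j hj j_lt) (arc_of_lt k hk k_lt)))

theorem transGen_or_transGen_of_isAntichain {Q : Set V} (h : IsBurling G lt arc)
    (hQ : IsAntichain lt Q) (φ : cycleGraph n ↪g G) (hφ : ∀ l, l ≠ 0 → φ l ∈ Q) (hi : 0 < i)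
    (hij : i < j) (hjk : j < k) :
    TransGen (fun x y => y ∈ Q ∧ arc x y) (φ i) (φ j) ∨
      TransGen (fun x y => y ∈ Q ∧ arc x y) (φ k) (φ j) := by
  let v (m : ℕ) : V := φ (Fin.ofNat n m)
  have v_val (l : Fin n) : v l = φ l := by simp [v]
  have mem_of_pos : ∀ m, 0 < m → m < n → v m ∈ Q := by
    intro m hm hmn
    refine hφ _ (Fin.ne_of_val_ne ?_)
    simp [Nat.mod_eq_of_lt hmn, hm.ne']
  have adj_succ : ∀ m, m + 1 < n → G.Adj (v m) (v (m + 1)) := by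
    intro m hm
    rw [φ.map_adj_iff, cycleGraph_adj_iff_val (by omega)]
    simp [Nat.mod_eq_of_lt hm, Nat.mod_eq_of_lt (m.lt_succ_self.trans hm)]
  rw [← v_val i, ← v_val j, ← v_val k]
  refine (transGen_or_transGen_of_path_without_source hij hjk (fun m _ hmk => ?_) ?_).imp
    (TransGen.lift v (fun _ _ => id) _ _) (TransGen.lift v (fun _ _ => id) _ _)
  · refine (h.adj_iff.1 (adj_succ m (by omega))).imp (.intro ?_) (.intro ?_)
    · exact mem_of_pos _ (by omega) (by omega)
    · exact mem_of_pos _ (by omega) (by omega)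
  · intro m _ hmk hback hforth
    have hm : m = m + 2 := by
      have hv := φ.injective (h.eq_of_arc_of_arc hQ hback.1 hforth.1 hback.2 hforth.2)
      have := congrArg Fin.val hv
      simp only [Fin.val_ofNat] at this
      rwa [Nat.mod_eq_of_lt (by omega), Nat.mod_eq_of_lt (by omega)] at this
    omega

theorem not_adj_three_of_isPivot (h : IsBurling G lt arc)
    (hpivot : IsPivot lt arc (range φ) (φ 0)) (hw : w ∉ range φ)
    (hij : i < j) (hjk : j < k) (hi : G.Adj w (φ i)) (hj : G.Adj w (φ j)) : ¬ G.Adj w (φ k) := by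
  intro hk
  have hlt := h.lt_pivot_of_adj hpivot hij hjk hi hj hk
  have hi0 : 0 < i := by
    refine Fin.pos_iff_ne_zero.2 fun hi0 => ?_
    rw [hi0] at hi
    exact h.not_lt_of_adj hi hlt
  have mem_of_ne_zero : ∀ l, l ≠ 0 → φ l ∈ range φ \ {φ 0} :=
    fun l hl => ⟨mem_range_self l, φ.injective.ne hl⟩
  have hiQ := mem_of_ne_zero i hi0.ne'
  have hjQ := mem_of_ne_zero j (hi0.trans hij).ne'
  have hkQ := mem_of_ne_zero k (hi0.trans (hij.trans hjk)).ne'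
  have hQ := h.isAntichain_diff_pivot φ (mem_range_self 0) hpivot
  have not_lt : ∀ q ∈ range φ \ {φ 0}, ¬ lt w q := by
    rintro _ ⟨⟨l, rfl⟩, hl⟩
    exact h.not_lt_of_isAntichain hQ hiQ hjQ hkQ hij hjk hi hj hk ⟨mem_range_self l, hl⟩
  rcases h.transGen_or_transGen_of_isAntichain hQ φ mem_of_ne_zero hi0 hij hjk with hpath | hpath
  · exact h.not_transGen_of_adj_of_adj hQ (hw ·.1) not_lt hiQ hjQ hi hj hpath
  · exact h.not_transGen_of_adj_of_adj hQ (hw ·.1) not_lt hkQ hjQ hk hj hpath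

end Hub

end Hole

theorem not_isWheel (h : IsBurling G lt arc) : ¬ IsWheel G := by
  intro hwheel
  obtain ⟨w, n, φ, hn, hφ, hw⟩ := hwheel.exists_cycleGraph_embedding
  have : NeZero n := ⟨by omega⟩
  obtain ⟨p, hp⟩ := h.exists_isPivot (by omega) φ
  obtain ⟨ψ, hψp, hψ⟩ := exists_cycleGraph_embedding_zero_eq φ p
  rw [← hψ] at hp hφ
  rw [← hψp] at hp
  have hsub : G.neighborSet w ⊆ range ψ := hφ ▸ fun u hu => hu.ne'
  rw [← ncard_preimage_of_injective_subset_range ψ.injective hsub] at hw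
  obtain ⟨i, hi, j, hj, k, hk, hij, hjk⟩ := exists_lt_lt_of_three_le_ncard hw
  exact h.not_adj_three_of_isPivot hp (by simp [hφ]) hij hjk hi hj hk

end IsBurling

/-- An upward closed chain; the stable sets of the Burling construction are of this kind. -/
structure IsUpChain {V : Type*} (lt : V → V → Prop) (S : Set V) : Prop where
  isChain : IsChain lt S
  mem_of_lt : ∀ {x y}, x ∈ S → lt x y → y ∈ S

section Next

variable {V : Type*} {𝒮 : Set (Set V)} {G : SimpleGraph V} {lt arc : V → V → Prop}

/-- The order on the vertices of `NEXT`: original vertices and copied vertices of the same copy keep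
their order, and the vertices `(S, x)` and `v_{S,T}` are put below every original vertex in `S`. -/
def nextLt (𝒮 : Set (Set V)) (lt : V → V → Prop) :
    V ⊕ ((𝒮 × V) ⊕ (𝒮 × 𝒮)) → V ⊕ ((𝒮 × V) ⊕ (𝒮 × 𝒮)) → Prop
  | .inl x, .inl y => lt x y
  | .inr (.inl (S, _)), .inl y => y ∈ S.1
  | .inr (.inl (S, x)), .inr (.inl (S', y)) => S = S' ∧ lt x y
  | .inr (.inr (S, _)), .inl y => y ∈ S.1
  | _, _ => False

/-- The orientation of the edges of `NEXT`: old edges keep their direction, and the new edges at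
`v_{S,T}` leave `v_{S,T}`. -/
def nextArc (𝒮 : Set (Set V)) (arc : V → V → Prop) :
    V ⊕ ((𝒮 × V) ⊕ (𝒮 × 𝒮)) → V ⊕ ((𝒮 × V) ⊕ (𝒮 × 𝒮)) → Prop
  | .inl x, .inl y => arc x y
  | .inr (.inl (S, x)), .inr (.inl (S', y)) => S = S' ∧ arc x y
  | .inr (.inr (S, T)), .inr (.inl (S', y)) => S = S' ∧ y ∈ T.1
  | _, _ => False

theorem nextLt_irrefl (hirrefl : ∀ x, ¬ lt x x) : ∀ x, ¬ nextLt 𝒮 lt x x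
  | .inl x => hirrefl x
  | .inr (.inl (_, x)) => fun h => hirrefl x h.2
  | .inr (.inr _) => id

theorem nextLt_trans (htrans : ∀ x y z, lt x y → lt y z → lt x z)
    (h𝒮 : ∀ S ∈ 𝒮, IsUpChain lt S) :
    ∀ {x y z}, nextLt 𝒮 lt x y → nextLt 𝒮 lt y z → nextLt 𝒮 lt x z
  | .inl _, .inl _, .inl _, hxy, hyz => htrans _ _ _ hxy hyz
  | .inr (.inl (S, _)), .inl _, .inl _, hxy, hyz => (h𝒮 S.1 S.2).mem_of_lt hxy hyz
  | .inr (.inl (_, _)), .inr (.inl (_, _)), .inl _, ⟨rfl, _⟩, hyz => hyz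
  | .inr (.inl _), .inr (.inl _), .inr (.inl _), ⟨hS, hxy⟩, ⟨hS', hyz⟩ =>
    ⟨hS.trans hS', htrans _ _ _ hxy hyz⟩
  | .inr (.inr (S, _)), .inl _, .inl _, hxy, hyz => (h𝒮 S.1 S.2).mem_of_lt hxy hyz

theorem nextArc_wellFounded (hwf : WellFounded arc) : WellFounded (nextArc 𝒮 arc) := by
  let proj : V ⊕ ((𝒮 × V) ⊕ (𝒮 × 𝒮)) → Unit ⊕ V :=
    Sum.elim Sum.inr (Sum.elim (fun p => Sum.inr p.2) (fun _ => Sum.inl ()))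
  refine Subrelation.wf (r := InvImage (Sum.Lex emptyRelation arc) proj) ?_
    (InvImage.wf _ (Sum.lex_wf emptyWf.wf hwf))
  rintro (x | ⟨S, x⟩ | ⟨S, T⟩) (y | ⟨S', y⟩ | ⟨S', T'⟩) hxy
  · exact .inr hxy
  · exact hxy.elim
  · exact hxy.elim
  · exact hxy.elim
  · exact .inr hxy.2
  · exact hxy.elim
  · exact hxy.elim
  · exact .sep _ _
  · exact hxy.elim

theorem nextLt_or_nextLt_of_nextArc_of_nextArc (h : IsBurling G lt arc)
    (h𝒮 : ∀ S ∈ 𝒮, IsUpChain lt S) : ∀ {x y z}, nextArc 𝒮 arc x y → nextArc 𝒮 arc x z → y ≠ z →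
      nextLt 𝒮 lt y z ∨ nextLt 𝒮 lt z y
  | .inl _, .inl _, .inl _, hxy, hxz, hne =>
    h.lt_or_lt_of_arc_of_arc hxy hxz (ne_of_apply_ne _ hne)
  | .inr (.inl (_, _)), .inr (.inl (_, _)), .inr (.inl (_, _)), ⟨rfl, hxy⟩, ⟨rfl, hxz⟩, hne =>
    (h.lt_or_lt_of_arc_of_arc hxy hxz fun hyz => hne (by rw [hyz])).imp
      (⟨rfl, ·⟩) (⟨rfl, ·⟩)
  | .inr (.inr (_, T)), .inr (.inl (_, _)), .inr (.inl (_, _)), ⟨rfl, hxy⟩, ⟨rfl, hxz⟩, hne =>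
    ((h𝒮 T.1 T.2).isChain hxy hxz fun hyz => hne (by rw [hyz])).imp
      (⟨rfl, ·⟩) (⟨rfl, ·⟩)

theorem nextLt_of_nextArc_of_nextLt (h : IsBurling G lt arc) :
    ∀ {x y z}, nextArc 𝒮 arc x y → nextLt 𝒮 lt x z → nextLt 𝒮 lt y z
  | .inl _, .inl _, .inl _, hxy, hxz => h.lt_of_arc_of_lt hxy hxz
  | .inr (.inl (_, _)), .inr (.inl (_, _)), .inl _, ⟨rfl, _⟩, hxz => hxz
  | .inr (.inl (_, _)), .inr (.inl (_, _)), .inr (.inl (_, _)), ⟨rfl, hxy⟩, ⟨rfl, hxz⟩ =>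
    ⟨rfl, h.lt_of_arc_of_lt hxy hxz⟩
  | .inr (.inr (_, _)), .inr (.inl (_, _)), .inl _, ⟨rfl, _⟩, hxz => hxz

theorem nextLt_or_nextArc_of_nextArc_of_nextLt (h : IsBurling G lt arc)
    (h𝒮 : ∀ S ∈ 𝒮, IsUpChain lt S) : ∀ {x y z}, nextArc 𝒮 arc x y → nextLt 𝒮 lt y z →
      nextLt 𝒮 lt x z ∨ nextArc 𝒮 arc x z
  | .inl _, .inl _, .inl _, hxy, hyz => h.lt_or_arc_of_arc_of_lt hxy hyz
  | .inr (.inl (_, _)), .inr (.inl (_, _)), .inl _, ⟨rfl, _⟩, hyz => .inl hyz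
  | .inr (.inl (_, _)), .inr (.inl (_, _)), .inr (.inl (_, _)), ⟨rfl, hxy⟩, ⟨rfl, hyz⟩ =>
    (h.lt_or_arc_of_arc_of_lt hxy hyz).imp (⟨rfl, ·⟩) (⟨rfl, ·⟩)
  | .inr (.inr (_, _)), .inr (.inl (_, _)), .inl _, ⟨rfl, _⟩, hyz => .inl hyz
  | .inr (.inr (_, T)), .inr (.inl (_, _)), .inr (.inl (_, _)), ⟨rfl, hxy⟩, ⟨rfl, hyz⟩ =>
    .inr ⟨rfl, (h𝒮 T.1 T.2).mem_of_lt hxy hyz⟩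
theorem IsUpChain.union_copy {S T : 𝒮}
    (hS : IsUpChain lt S.1) (hT : IsUpChain lt T.1) :
    IsUpChain (nextLt 𝒮 lt) (Sum.inl '' S.1 ∪ (fun u => Sum.inr (Sum.inl (S, u))) '' T.1) where
  isChain := by
    rintro _ (⟨x, hx, rfl⟩ | ⟨x, hx, rfl⟩) _ (⟨y, hy, rfl⟩ | ⟨y, hy, rfl⟩) hne
    · exact hS.isChain hx hy (ne_of_apply_ne _ hne)
    · exact .inr hx
    · exact .inl hy
    · exact (hT.isChain hx hy fun hxy => hne (by rw [hxy])).imp (⟨rfl, ·⟩) (⟨rfl, ·⟩)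
  mem_of_lt := by
    rintro _ (y | ⟨S', y⟩ | ⟨S', T'⟩) (⟨x, hx, rfl⟩ | ⟨x, hx, rfl⟩) hlt
    · exact .inl ⟨y, hS.mem_of_lt hx hlt, rfl⟩
    · exact .inl ⟨y, hlt, rfl⟩
    · exact hlt.elim
    · obtain ⟨rfl, hlt⟩ := hlt
      exact .inr ⟨y, hT.mem_of_lt hx hlt, rfl⟩
    · exact hlt.elim
    · exact hlt.elim

theorem IsUpChain.insert_new {S : 𝒮}
    (hS : IsUpChain lt S.1) (T : 𝒮) :
    IsUpChain (nextLt 𝒮 lt) (insert (Sum.inr (Sum.inr (S, T))) (Sum.inl '' S.1)) where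
  isChain := by
    rintro _ (rfl | ⟨x, hx, rfl⟩) _ (rfl | ⟨y, hy, rfl⟩) hne
    · exact (hne rfl).elim
    · exact .inl hy
    · exact .inr hx
    · exact hS.isChain hx hy (ne_of_apply_ne _ hne)
  mem_of_lt := by
    rintro _ (y | ⟨S', y⟩ | ⟨S', T'⟩) (rfl | ⟨x, hx, rfl⟩) hlt
    · exact .inr ⟨y, hlt, rfl⟩
    · exact .inr ⟨y, hS.mem_of_lt hx hlt, rfl⟩
    all_goals exact hlt.elim

end Next

theorem next_adj_iff {P : GSPair} {arc : P.V → P.V → Prop}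
    (hadj : ∀ {x y}, P.G.Adj x y ↔ arc x y ∨ arc y x) {x y : (NEXT P).V} :
    (NEXT P).G.Adj x y ↔ nextArc P.S arc x y ∨ nextArc P.S arc y x := by
  have hne : ∀ {u v}, P.G.Adj u v → u ≠ v := SimpleGraph.Adj.ne
  obtain (x | ⟨S, x⟩ | ⟨S, T⟩) := x <;> obtain (y | ⟨S', y⟩ | ⟨S', T'⟩) := y <;>
    simp only [NEXT, nextArc, fromRel_adj, ne_eq, reduceCtorEq, Sum.inl.injEq, Sum.inr.injEq,
      Prod.mk.injEq] <;> grind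

theorem IsBurling.next {P : GSPair} {lt arc : P.V → P.V → Prop} (h : IsBurling P.G lt arc)
    (hS : ∀ S ∈ P.S, IsUpChain lt S) :
    IsBurling (NEXT P).G (nextLt P.S lt) (nextArc P.S arc) where
  adj_iff := next_adj_iff h.adj_iff
  lt_irrefl := nextLt_irrefl h.lt_irrefl
  lt_trans := nextLt_trans (lt := lt) (fun _ _ _ => h.lt_trans) hS
  wellFounded := nextArc_wellFounded h.wellFounded
  lt_or_lt_of_arc_of_arc := nextLt_or_nextLt_of_nextArc_of_nextArc h hS
  lt_of_arc_of_lt := nextLt_of_nextArc_of_nextLt h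
  lt_or_arc_of_arc_of_lt := nextLt_or_nextArc_of_nextArc_of_nextLt h hS

theorem IsUpChain.of_mem_next {P : GSPair} {lt : P.V → P.V → Prop}
    (hP : ∀ S ∈ P.S, IsUpChain lt S) : ∀ A ∈ (NEXT P).S, IsUpChain (nextLt P.S lt) A := by
  rintro _ ⟨S, T, rfl | rfl⟩
  · exact (hP S.1 S.2).union_copy (hP T.1 T.2)
  · exact (hP S.1 S.2).insert_new T

theorem isBurling_bot {V : Type*} : IsBurling (⊥ : SimpleGraph V) emptyRelation emptyRelation where
  adj_iff := by simp [emptyRelation]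
  lt_irrefl _ := id
  lt_trans := False.elim
  wellFounded := emptyWf.wf
  lt_or_lt_of_arc_of_arc := False.elim
  lt_of_arc_of_lt := False.elim
  lt_or_arc_of_arc_of_lt := False.elim

theorem exists_isBurling_burlingPair (k : ℕ) : ∃ lt arc,
    IsBurling (BurlingPair k).G lt arc ∧ ∀ S ∈ (BurlingPair k).S, IsUpChain lt S := by
  induction k with
  | zero =>
    refine ⟨emptyRelation, emptyRelation, isBurling_bot, fun S _ => ⟨?_, fun _ => False.elim⟩⟩
    exact fun x _ y _ hne => (hne (Subsingleton.elim (α := Unit) x y)).elim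
  | succ k ih =>
    obtain ⟨lt, arc, h, hS⟩ := ih
    exact ⟨_, _, h.next hS, IsUpChain.of_mem_next hS⟩

theorem next_adj_of_nextArc {P : GSPair} {x y : (NEXT P).V} (h : nextArc P.S P.G.Adj x y) :
    (NEXT P).G.Adj x y :=
  (next_adj_iff (by simp [adj_comm])).2 (.inl h)

/-- The original copy of `P.G` in `NEXT P`. -/
def nextInclHom (P : GSPair) : P.G →g (NEXT P).G where
  toFun := .inl
  map_rel' h := next_adj_of_nextArc h

/-- The copy of `P.G` in `NEXT P` indexed by `S`, on the vertices `(S, x)`. -/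
def nextCopyHom (P : GSPair) (S : P.S) : P.G →g (NEXT P).G where
  toFun x := .inr (.inl (S, x))
  map_rel' h := next_adj_of_nextArc ⟨rfl, h⟩

/- With `A` the colours of `S` and `B` those of the copy of `T`, the colour `c` of `v_{S,T}` is not
in `B`. Either `c ∈ A`, so that `A ∪ B` is larger than `B`, or `insert c A` is larger than `A`. -/
theorem exists_mem_next_le_encard_image {P : GSPair} {α : Type*} {k : ℕ∞}
    (hP : ∀ C : P.G.Coloring α, ∃ S ∈ P.S, k ≤ (C '' S).encard) (C : (NEXT P).G.Coloring α) :
    ∃ A ∈ (NEXT P).S, k + 1 ≤ (C '' A).encard := by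
  obtain ⟨S, hS, hkS⟩ := hP (C.comp (nextInclHom P))
  obtain ⟨T, hT, hkT⟩ := hP (C.comp (nextCopyHom P ⟨S, hS⟩))
  let old := nextInclHom P '' S
  let copy := nextCopyHom P ⟨S, hS⟩ '' T
  let new : (NEXT P).V := .inr (.inr (⟨S, hS⟩, ⟨T, hT⟩))
  have hold : k ≤ (C '' old).encard := by rwa [← image_comp]
  have hcopy : k ≤ (C '' copy).encard := by rwa [← image_comp]
  have hnew : C new ∉ C '' copy := by
    rintro ⟨_, ⟨u, hu, rfl⟩, heq⟩
    have hadj : (NEXT P).G.Adj new (nextCopyHom P ⟨S, hS⟩ u) := next_adj_of_nextArc ⟨rfl, hu⟩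
    exact C.valid hadj heq.symm
  by_cases hmem : C new ∈ C '' old
  · refine ⟨old ∪ copy, ⟨⟨S, hS⟩, ⟨T, hT⟩, .inl rfl⟩, ?_⟩
    calc k + 1 ≤ (C '' copy).encard + 1 := by gcongr
      _ = (insert (C new) (C '' copy)).encard := (encard_insert_of_notMem hnew).symm
      _ ≤ (C '' (old ∪ copy)).encard := by
        rw [image_union]
        exact encard_le_encard (insert_subset (.inl hmem) subset_union_right)
  · refine ⟨insert new old, ⟨⟨S, hS⟩, ⟨T, hT⟩, .inr rfl⟩, ?_⟩
    rw [image_insert_eq, encard_insert_of_notMem hmem]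
    gcongr

theorem exists_mem_burlingPair_le_encard_image {α : Type*} (k : ℕ) :
    ∀ C : (BurlingPair k).G.Coloring α,
      ∃ S ∈ (BurlingPair k).S, (k + 1 : ℕ∞) ≤ (C '' S).encard := by
  induction k with
  | zero =>
    intro C
    have hne : (C '' univ).Nonempty := ⟨C (), (), trivial, rfl⟩
    exact ⟨univ, rfl, by simpa using one_le_encard_iff_nonempty.2 hne⟩
  | succ k ih => exact mod_cast exists_mem_next_le_encard_image ih

theorem le_chromaticNumber_burlingPair (k : ℕ) :
    (k + 1 : ℕ∞) ≤ (BurlingPair k).G.chromaticNumber := by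
  rw [← Nat.cast_one, ← Nat.cast_add, le_chromaticNumber_iff_coloring]
  intro m C
  obtain ⟨S, -, hS⟩ := exists_mem_burlingPair_le_encard_image k C
  have hm : (C '' S).encard ≤ m := by
    simpa using encard_le_encard (subset_univ (C '' S))
  exact mod_cast hS.trans hm

/-- **Corollary.** For every positive integer `k` there is a triangle-free graph with no
induced wheel and chromatic number at least `k`. -/
theorem exists_triangleFree_no_induced_wheel_chromatic_ge (k : ℕ) (hk : 0 < k) :
    ∃ (V : Type) (G : SimpleGraph V), G.CliqueFree 3 ∧
      (∀ s : Set V, ¬ IsWheel (G.induce s)) ∧ (k : ℕ∞) ≤ G.chromaticNumber := by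
  obtain ⟨k, rfl⟩ := Nat.exists_eq_add_one.2 hk
  obtain ⟨lt, arc, h, -⟩ := exists_isBurling_burlingPair k
  exact ⟨_, (BurlingPair k).G, h.cliqueFree_three, fun s => (h.induce s).not_isWheel,
    mod_cast le_chromaticNumber_burlingPair k⟩
end

section
/- Let (G,T) be a clean graft and let t ∈ T. Then pendent((G,T),t) is a clean graft. -/
universe u

/-!
Contracting the pendant edge `tt'` is the map `Option.getD · t`. It sends `T'` injectively into `T`,
and it fixes every neighbour of an old vertex other than `t`.

The new vertex `t'` has degree one. It therefore lies on no clique with at least three vertices and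
on no induced cycle, and it is not a hub; so wheels and triangles of `pendent((G,T),t)` already live
in `G`. On an induced path with at least two vertices it can only be an end, with `t` as its
neighbour, so the contraction shortens that path to an induced path of `G` whose ends are the images
of the old ends. Thus a guarded fan or a mountable path contracts to one in `(G,T)`.
-/

open SimpleGraph

/-- Some induced subgraph of `G` is a wheel, expressed by an embedding of its rim and a hub off the
rim. -/
def ContainsWheel {V : Type*} (G : SimpleGraph V) : Prop :=
  ∃ (n : ℕ) (p : cycleGraph n ↪g G), 4 ≤ n ∧
    ∃ f ∉ Set.range p, 3 ≤ (G.neighborSet f ∩ Set.range p).ncard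

/-- Some induced subgraft of `(G, T)` is a guarded fan, expressed by an embedding of its path and a
pivot off the path. -/
def ContainsGuardedFan {V : Type*} (G : SimpleGraph V) (T : Set V) : Prop :=
  ∃ (n : ℕ) (p : pathGraph (n + 1) ↪g G), p 0 ∈ T ∧ p (Fin.last n) ∈ T ∧
    ∃ f ∉ Set.range p, 3 ≤ (G.neighborSet f ∩ Set.range p).ncard

/-- Some induced subgraft of `(G, T)` is a mountable path, expressed by an embedding of that
path. -/
def ContainsMountablePath {V : Type*} (G : SimpleGraph V) (T : Set V) : Prop :=
  ∃ (n : ℕ) (p : pathGraph n ↪g G), 3 ≤ (T ∩ Set.range p).ncard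

section Containment

variable {V W : Type*} {G : SimpleGraph V} {H : SimpleGraph W} {T : Set V}

theorem exists_embedding_range_eq_sdiff_singleton {s : Set V} {w : s}
    (e : (G.induce s).induce {u | u ≠ w} ≃g H) :
    ∃ p : H ↪g G, (∀ k, p k = (e.symm k).1) ∧ Set.range p = s \ {w.1} := by
  refine ⟨(Embedding.induce s).comp ((Embedding.induce _).comp e.symm.toEmbedding),
    fun _ ↦ rfl, ?_⟩
  ext v
  constructor
  · rintro ⟨k, rfl⟩
    exact ⟨(e.symm k).1.2, fun h ↦ (e.symm k).2 (Subtype.ext h)⟩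
  · rintro ⟨hv, hne⟩
    refine ⟨e ⟨⟨v, hv⟩, fun h ↦ hne (congrArg Subtype.val h)⟩, ?_⟩
    exact congrArg (fun u ↦ (u.1 : V)) (e.symm_apply_apply _)

theorem exists_induce_insert_range_iso (p : H ↪g G) {f : V} (hf : f ∉ Set.range p) :
    ∃ e : (G.induce (insert f (Set.range p))).induce {u | u ≠ ⟨f, Set.mem_insert _ _⟩} ≃g H,
      ∀ k, ((e.symm k).1 : V) = p k := by
  let g : W → {u : ↥(insert f (Set.range p)) // u ≠ ⟨f, Set.mem_insert _ _⟩} := fun k ↦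
    ⟨⟨p k, .inr ⟨k, rfl⟩⟩, fun h ↦ hf ⟨k, congrArg Subtype.val h⟩⟩
  have hg : Function.Bijective g := by
    refine ⟨fun a b h ↦ p.injective (congrArg (fun x ↦ x.1.1) h), ?_⟩
    rintro ⟨⟨x, rfl | ⟨k, rfl⟩⟩, hne⟩
    · exact absurd rfl hne
    · exact ⟨k, rfl⟩
  let e : H ≃g (G.induce (insert f (Set.range p))).induce {u | u ≠ ⟨f, Set.mem_insert _ _⟩} :=
    ⟨.ofBijective g hg, p.map_adj_iff⟩
  exact ⟨e.symm, fun _ ↦ rfl⟩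

theorem ncard_preimage_val (s T : Set V) :
    (Subtype.val ⁻¹' T : Set s).ncard = (T ∩ s).ncard :=
  Set.ncard_subtype (· ∈ s) T

theorem ncard_neighborSet_induce (G : SimpleGraph V) {s : Set V} (w : s) :
    ((G.induce s).neighborSet w).ncard = (G.neighborSet w ∩ (s \ {w.1})).ncard := by
  have hw : w.1 ∉ G.neighborSet w ∩ s := fun h ↦ h.1.ne rfl
  rw [neighborSet_induce, ncard_preimage_val, ← Set.inter_sdiff_assoc,
    Set.sdiff_singleton_eq_self hw]

theorem ncard_neighborSet_induce_insert (G : SimpleGraph V) {s : Set V} {f : V} (hf : f ∉ s) :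
    ((G.induce (insert f s)).neighborSet ⟨f, Set.mem_insert _ _⟩).ncard =
      (G.neighborSet f ∩ s).ncard := by
  rw [ncard_neighborSet_induce, Set.insert_sdiff_self_of_notMem hf]

theorem exists_isWheel_induce_iff :
    (∃ s : Set V, IsWheel (G.induce s)) ↔ ContainsWheel G := by
  constructor
  · rintro ⟨s, w, n, hn, ⟨e⟩, hw⟩
    obtain ⟨p, -, hp⟩ := exists_embedding_range_eq_sdiff_singleton e
    rw [ncard_neighborSet_induce, ← hp] at hw
    exact ⟨n, p, hn, w, by simp [hp], hw⟩
  · rintro ⟨n, p, hn, f, hf, hdeg⟩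
    obtain ⟨e, -⟩ := exists_induce_insert_range_iso p hf
    rw [← ncard_neighborSet_induce_insert G hf] at hdeg
    exact ⟨_, _, n, hn, ⟨e⟩, hdeg⟩

theorem exists_isGuardedFan_induce_iff :
    (∃ s : Set V, IsGuardedFan (G.induce s) (Subtype.val ⁻¹' T)) ↔ ContainsGuardedFan G T := by
  constructor
  · rintro ⟨s, w, n, e, hw, h0, hlast⟩
    obtain ⟨p, hpe, hp⟩ := exists_embedding_range_eq_sdiff_singleton e
    rw [ncard_neighborSet_induce, ← hp] at hw
    rw [Set.mem_preimage, ← hpe] at h0 hlast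
    exact ⟨n, p, h0, hlast, w, by simp [hp], hw⟩
  · rintro ⟨n, p, h0, hlast, f, hf, hdeg⟩
    obtain ⟨e, he⟩ := exists_induce_insert_range_iso p hf
    rw [← ncard_neighborSet_induce_insert G hf] at hdeg
    rw [← he] at h0 hlast
    exact ⟨_, _, n, e, hdeg, h0, hlast⟩

theorem exists_isMountablePath_induce_iff :
    (∃ s : Set V, IsMountablePath (G.induce s) (Subtype.val ⁻¹' T)) ↔
      ContainsMountablePath G T := by
  simp only [IsMountablePath, ncard_preimage_val]
  constructor
  · rintro ⟨s, ⟨n, ⟨e⟩⟩, hs⟩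
    have hp : Set.range ((Embedding.induce s).comp e.symm.toEmbedding) = s :=
      (e.symm.surjective.range_comp _).trans Subtype.range_val
    exact ⟨n, _, hp.symm ▸ hs⟩
  · rintro ⟨n, p, hp⟩
    exact ⟨_, ⟨n, ⟨p.isoInduceRange.symm⟩⟩, hp⟩

theorem isCleanGraft_iff :
    IsCleanGraft G T ↔ G.CliqueFree 3 ∧ (∀ u ∈ T, ∀ v ∈ T, ¬ G.Adj u v) ∧
      ¬ ContainsWheel G ∧ ¬ ContainsGuardedFan G T ∧ ¬ ContainsMountablePath G T := by
  simp only [IsCleanGraft, ← exists_isWheel_induce_iff, ← exists_isGuardedFan_induce_iff,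
    ← exists_isMountablePath_induce_iff, not_exists]

end Containment

theorem ncard_inter_range_le {ι α : Type*} [Finite ι] (s : Set α) (f : ι → α) :
    (s ∩ Set.range f).ncard ≤ Nat.card ι :=
  calc (s ∩ Set.range f).ncard ≤ (f '' Set.univ).ncard := by
        rw [Set.image_univ]
        exact Set.ncard_le_ncard Set.inter_subset_right (Set.finite_range f)
    _ ≤ (Set.univ : Set ι).ncard := Set.ncard_image_le
    _ = Nat.card ι := Set.ncard_univ ι

theorem nontrivial_neighborSet_top {W : Type*} (hW : 3 ≤ Nat.card W) (k : W) :
    ((⊤ : SimpleGraph W).neighborSet k).Nontrivial := by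
  have : Finite W := Nat.finite_of_card_ne_zero (by omega)
  rw [neighborSet_top, ← Set.one_lt_ncard_iff_nontrivial, Set.ncard_compl, Set.ncard_singleton]
  omega

theorem nontrivial_neighborSet_cycleGraph {n : ℕ} (hn : 3 ≤ n) (k : Fin n) :
    ((cycleGraph n).neighborSet k).Nontrivial := by
  obtain ⟨m, rfl⟩ := Nat.exists_eq_add_of_le' hn
  have hdeg := cycleGraph_degree_three_le (v := k)
  rw [← card_neighborFinset_eq_degree, ← Set.ncard_coe_finset, coe_neighborFinset] at hdeg
  rw [← Set.one_lt_ncard_iff_nontrivial, hdeg]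
  exact one_lt_two

theorem eq_zero_or_eq_last_of_subsingleton_neighborSet {n : ℕ} {k : Fin (n + 1)}
    (hk : ((pathGraph (n + 1)).neighborSet k).Subsingleton) : k = 0 ∨ k = Fin.last n := by
  by_contra! ⟨h0, hlast⟩
  have h0 : k.val ≠ 0 := Fin.val_ne_of_ne h0
  have hlast : k.val ≠ n := Fin.val_ne_of_ne hlast
  have hpred : (pathGraph (n + 1)).Adj k ⟨k - 1, by omega⟩ := by
    rw [pathGraph_adj]; dsimp only; omega
  have hsucc : (pathGraph (n + 1)).Adj k ⟨k + 1, by omega⟩ := by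
    rw [pathGraph_adj]; dsimp only; omega
  have := congrArg Fin.val (hk hpred hsucc)
  dsimp only at this
  omega

/-- The embedding of the path graph on `n` vertices that skips the first vertex. -/
def pathGraphSuccEmb (n : ℕ) : pathGraph n ↪g pathGraph (n + 1) where
  toEmbedding := Fin.succEmb n
  map_rel_iff' := by simp [pathGraph_adj]

/-- The embedding of the path graph on `n` vertices that skips the last vertex. -/
def pathGraphCastSuccEmb (n : ℕ) : pathGraph n ↪g pathGraph (n + 1) where
  toEmbedding := Fin.castSuccEmb
  map_rel_iff' := by simp [pathGraph_adj]

section Pendent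

variable {V W X : Type*} {G : SimpleGraph V} {H : SimpleGraph W} {K : SimpleGraph X}
  {T : Set V} {t : V}

@[simp]
theorem pendentGraph_adj_some_some {u v : V} :
    (pendentGraph G t).Adj (some u) (some v) ↔ G.Adj u v := by
  simp only [pendentGraph, fromRel_adj]
  constructor
  · rintro ⟨-, (⟨_, _, ⟨⟩, ⟨⟩, h⟩ | ⟨⟨⟩, -⟩) | (⟨_, _, ⟨⟩, ⟨⟩, h⟩ | ⟨⟨⟩, -⟩)⟩
    · exact h
    · exact h.symm
  · exact fun h ↦ ⟨by simpa using h.ne, .inl (.inl ⟨u, v, rfl, rfl, h⟩)⟩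

@[simp]
theorem pendentGraph_adj_none {x : Option V} :
    (pendentGraph G t).Adj none x ↔ x = some t := by
  simp only [pendentGraph, fromRel_adj]
  constructor
  · rintro ⟨-, (⟨_, _, ⟨⟩, -⟩ | ⟨-, h⟩) | (⟨_, _, -, ⟨⟩, -⟩ | ⟨-, ⟨⟩⟩)⟩
    exact h
  · rintro rfl
    exact ⟨nofun, .inl (.inr (by simp))⟩

theorem pendentGraph_neighborSet_none : (pendentGraph G t).neighborSet none = {some t} := by
  ext x
  simp

@[simp]
theorem some_mem_pendentT {v : V} : some v ∈ pendentT T t ↔ v ∈ T ∧ v ≠ t := by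
  simp [pendentT]

theorem mapsTo_getD_pendentT (ht : t ∈ T) :
    Set.MapsTo (Option.getD · t) (pendentT T t) T := by
  rintro (_ | v) hv
  · exact ht
  · exact (some_mem_pendentT.mp hv).1

theorem injOn_getD_pendentT : Set.InjOn (Option.getD · t) (pendentT T t) := by
  rintro (_ | u) hu (_ | v) hv huv
  · rfl
  · exact absurd huv.symm (some_mem_pendentT.mp hv).2
  · exact absurd huv (some_mem_pendentT.mp hu).2
  · exact congrArg some huv

theorem pendentGraph_not_adj_of_mem_pendentT (hT : ∀ u ∈ T, ∀ v ∈ T, ¬ G.Adj u v) :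
    ∀ x ∈ pendentT T t, ∀ y ∈ pendentT T t, ¬ (pendentGraph G t).Adj x y := by
  have some_t_notMem : some t ∉ pendentT T t := by simp
  rintro (_ | u) hu (_ | v) hv huv
  · exact huv.ne rfl
  · exact some_t_notMem (pendentGraph_adj_none.mp huv ▸ hv)
  · exact some_t_notMem (pendentGraph_adj_none.mp huv.symm ▸ hu)
  · exact hT u (some_mem_pendentT.mp hu).1 v (some_mem_pendentT.mp hv).1
      (pendentGraph_adj_some_some.mp huv)

theorem subsingleton_neighborSet_of_eq_none (p : H ↪g pendentGraph G t) {k : W}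
    (hk : p k = none) : (H.neighborSet k).Subsingleton := by
  rw [← p.preimage_neighborSet, hk, pendentGraph_neighborSet_none]
  exact Set.subsingleton_singleton.preimage p.injective

theorem exists_embedding_of_forall_ne_none (p : H ↪g pendentGraph G t) (hp : ∀ k, p k ≠ none) :
    ∃ q : H ↪g G, ∀ k, p k = some (q k) := by
  choose q hq using fun k ↦ Option.ne_none_iff_exists'.mp (hp k)
  refine ⟨⟨⟨q, fun a b hab ↦ p.injective ?_⟩, fun {a b} ↦ ?_⟩, hq⟩
  · rw [hq, hq, hab]
  · rw [← p.map_adj_iff, hq, hq, pendentGraph_adj_some_some]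
    rfl

theorem exists_embedding_of_forall_nontrivial_neighborSet
    (hH : ∀ k, (H.neighborSet k).Nontrivial) (p : H ↪g pendentGraph G t) :
    ∃ q : H ↪g G, ∀ k, p k = some (q k) :=
  exists_embedding_of_forall_ne_none p fun k hk ↦
    (hH k).not_subsingleton (subsingleton_neighborSet_of_eq_none p hk)

theorem exists_embedding_comp_of_eq_none (ι : H ↪g K) (p : K ↪g pendentGraph G t) {j : X} {i : W}
    (hj : p j = none) (hι : ∀ k, k ∈ Set.range ι ↔ k ≠ j) (hij : K.Adj j (ι i)) :
    ∃ r : H ↪g G, r i = t ∧ (∀ k, p (ι k) = some (r k)) ∧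
      Set.MapsTo (Option.getD · t) (Set.range p) (Set.range r) := by
  obtain ⟨r, hr⟩ := exists_embedding_of_forall_ne_none (p.comp ι) fun k hk ↦
    (hι (ι k)).mp ⟨k, rfl⟩ (p.injective (hk.trans hj.symm))
  replace hr : ∀ k, p (ι k) = some (r k) := hr
  have hri : r i = t := by
    have hadj := p.map_adj_iff.mpr hij
    rw [hj, hr, pendentGraph_adj_none] at hadj
    exact Option.some.inj hadj
  refine ⟨r, hri, hr, ?_⟩
  rintro _ ⟨k, rfl⟩
  by_cases hk : k = j
  · exact ⟨i, by simp [hk, hj, hri]⟩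
  · obtain ⟨l, rfl⟩ := (hι k).mpr hk
    exact ⟨l, by simp [hr]⟩

theorem cliqueFree_pendentGraph {n : ℕ} (hn : 3 ≤ n) (hG : G.CliqueFree n) :
    (pendentGraph G t).CliqueFree n := by
  by_contra h
  obtain ⟨q, -⟩ := exists_embedding_of_forall_nontrivial_neighborSet
    (nontrivial_neighborSet_top (by simpa using hn)) (topEmbeddingOfNotCliqueFree h)
  exact q.toCopy.isContained.not_cliqueFree hG

theorem ncard_neighborSet_some_inter_le {A : Set (Option V)} {B : Set V} {f : V}
    (hAB : Set.MapsTo (Option.getD · t) A B) (hBA : Set.MapsTo some B A) (hB : B.Finite)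
    (hf : some f ∉ A) :
    ((pendentGraph G t).neighborSet (some f) ∩ A).ncard ≤ (G.neighborSet f ∩ B).ncard := by
  have not_adj_none : none ∈ A → ¬ (pendentGraph G t).Adj (some f) none := fun hA hadj ↦
    hf (pendentGraph_adj_none.mp hadj.symm ▸ hBA (hAB hA))
  refine Set.ncard_le_ncard_of_injOn (Option.getD · t) ?_ ?_ (hB.inter_of_right _)
  · rintro (_ | v) ⟨hadj, hA⟩
    · exact absurd hadj (not_adj_none hA)
    · exact ⟨pendentGraph_adj_some_some.mp hadj, hAB hA⟩
  · rintro (_ | u) ⟨hu, huA⟩ (_ | v) ⟨hv, hvA⟩ huv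
    · rfl
    · exact absurd hu (not_adj_none huA)
    · exact absurd hv (not_adj_none hvA)
    · exact congrArg some huv

theorem exists_hub_of_pendentGraph {A : Set (Option V)} {B : Set V} {d : ℕ} (hd : 2 ≤ d)
    (hAB : Set.MapsTo (Option.getD · t) A B) (hBA : Set.MapsTo some B A) (hB : B.Finite)
    (h : ∃ f ∉ A, d ≤ ((pendentGraph G t).neighborSet f ∩ A).ncard) :
    ∃ f ∉ B, d ≤ (G.neighborSet f ∩ B).ncard := by
  obtain ⟨_ | f, hfA, hdeg⟩ := h
  · have hle : ((pendentGraph G t).neighborSet none ∩ A).ncard ≤ 1 := by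
      rw [pendentGraph_neighborSet_none, ← Set.ncard_singleton (some t)]
      exact Set.ncard_le_ncard Set.inter_subset_left
    omega
  · exact ⟨f, fun hfB ↦ hfA (hBA hfB),
      hdeg.trans (ncard_neighborSet_some_inter_le hAB hBA hB hfA)⟩

theorem ContainsWheel.of_pendentGraph (h : ContainsWheel (pendentGraph G t)) :
    ContainsWheel G := by
  obtain ⟨n, p, hn, hub⟩ := h
  obtain ⟨q, hq⟩ := exists_embedding_of_forall_nontrivial_neighborSet
    (nontrivial_neighborSet_cycleGraph (by omega)) p
  refine ⟨n, q, hn, exists_hub_of_pendentGraph (by norm_num) ?_ ?_ (Set.finite_range q) hub⟩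
  · exact Set.mapsTo_range_iff.mpr fun k ↦ ⟨k, by simp [hq]⟩
  · exact Set.mapsTo_range_iff.mpr fun k ↦ ⟨k, hq k⟩

theorem exists_pathGraph_embedding_getD {n : ℕ} (p : pathGraph (n + 2) ↪g pendentGraph G t) :
    ∃ (m : ℕ) (r : pathGraph (m + 1) ↪g G),
      Set.MapsTo (Option.getD · t) (Set.range p) (Set.range r) ∧
      Set.MapsTo some (Set.range r) (Set.range p) ∧
      r 0 = (p 0).getD t ∧ r (Fin.last m) = (p (Fin.last (n + 1))).getD t := by
  by_cases hp : ∃ j, p j = none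
  · obtain ⟨j, hj⟩ := hp
    obtain rfl | rfl := eq_zero_or_eq_last_of_subsingleton_neighborSet
      (subsingleton_neighborSet_of_eq_none p hj)
    · obtain ⟨r, hr0, hr, hpr⟩ := exists_embedding_comp_of_eq_none
        (pathGraphSuccEmb (n + 1)) (i := 0) p hj (fun _ ↦ Fin.exists_succ_eq)
        (pathGraph_adj.mpr (.inl rfl))
      replace hr : ∀ k : Fin (n + 1), p k.succ = some (r k) := hr
      refine ⟨n, r, hpr, Set.mapsTo_range_iff.mpr fun k ↦ ⟨k.succ, hr k⟩,
        by simp [hj, hr0], congrArg (Option.getD · t) (hr (Fin.last n)).symm⟩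
    · obtain ⟨r, hrlast, hr, hpr⟩ := exists_embedding_comp_of_eq_none
        (pathGraphCastSuccEmb (n + 1)) (i := Fin.last n) p hj (fun _ ↦ Fin.exists_castSucc_eq)
        (pathGraph_adj.mpr (.inr rfl))
      replace hr : ∀ k : Fin (n + 1), p k.castSucc = some (r k) := hr
      refine ⟨n, r, hpr, Set.mapsTo_range_iff.mpr fun k ↦ ⟨k.castSucc, hr k⟩,
        congrArg (Option.getD · t) (hr 0).symm, by simp [hj, hrlast]⟩
  · obtain ⟨r, hr⟩ := exists_embedding_of_forall_ne_none p (not_exists.mp hp)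
    exact ⟨n + 1, r, Set.mapsTo_range_iff.mpr fun k ↦ ⟨k, by simp [hr]⟩,
      Set.mapsTo_range_iff.mpr fun k ↦ ⟨k, hr k⟩, by simp [hr], by simp [hr]⟩

theorem ContainsGuardedFan.of_pendentGraph (ht : t ∈ T)
    (h : ContainsGuardedFan (pendentGraph G t) (pendentT T t)) : ContainsGuardedFan G T := by
  obtain ⟨n, p, h0, hlast, f, hf, hdeg⟩ := h
  have hn : 3 ≤ n + 1 := by simpa using hdeg.trans (ncard_inter_range_le _ p)
  obtain ⟨n, rfl⟩ : ∃ k, n = k + 1 := Nat.exists_eq_add_of_le' (by omega)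
  obtain ⟨m, r, hpr, hrp, hr0, hrlast⟩ := exists_pathGraph_embedding_getD p
  exact ⟨m, r, hr0 ▸ mapsTo_getD_pendentT ht h0, hrlast ▸ mapsTo_getD_pendentT ht hlast,
    exists_hub_of_pendentGraph (by norm_num) hpr hrp (Set.finite_range r) ⟨f, hf, hdeg⟩⟩

theorem ContainsMountablePath.of_pendentGraph (ht : t ∈ T)
    (h : ContainsMountablePath (pendentGraph G t) (pendentT T t)) :
    ContainsMountablePath G T := by
  obtain ⟨n, p, hp⟩ := h
  have hn : 3 ≤ n := by simpa using hp.trans (ncard_inter_range_le _ p)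
  obtain ⟨n, rfl⟩ : ∃ k, n = k + 2 := Nat.exists_eq_add_of_le' (by omega)
  obtain ⟨m, r, hpr, -⟩ := exists_pathGraph_embedding_getD p
  exact ⟨m + 1, r, hp.trans <| Set.ncard_le_ncard_of_injOn (Option.getD · t)
    ((mapsTo_getD_pendentT ht).inter_inter hpr) (injOn_getD_pendentT.mono Set.inter_subset_left)
    ((Set.finite_range r).inter_of_right T)⟩

end Pendent

/-- **Lemma.** If `(G, T)` is a clean graft and `t ∈ T`, then `pendent((G,T),t)` is clean. -/
theorem pendent_isCleanGraft {V : Type u} (G : SimpleGraph V) (T : Set V)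
    (h : IsCleanGraft G T) (t : V) (ht : t ∈ T) :
    IsCleanGraft (pendentGraph G t) (pendentT T t) := by
  rw [isCleanGraft_iff] at h ⊢
  obtain ⟨triangleFree, stable, noWheel, noGuardedFan, noMountablePath⟩ := h
  exact ⟨cliqueFree_pendentGraph le_rfl triangleFree,
    pendentGraph_not_adj_of_mem_pendentT stable,
    mt ContainsWheel.of_pendentGraph noWheel,
    mt (ContainsGuardedFan.of_pendentGraph ht) noGuardedFan,
    mt (ContainsMountablePath.of_pendentGraph ht) noMountablePath⟩
end

section
/- Let (G,T) be a clean graft and let t ∈ T. Then clone((G,T),t) is a clean graft. -/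
universe u

/-! An induced subgraph of the clone that misses `t` or `t'` is isomorphic to an induced subgraph
of `G`, so only the forbidden configurations containing both `t` and `t'` are at stake. There `t`
and `t'` are false twins. In a path or a cycle, false twins `x` and `y` dominate everything: a
neighbour of `x` is a neighbour of `y`, hence has no further neighbour, so by connectedness there
are no vertices besides `x`, `y` and their common neighbours. In a triangle-free graph consisting
of a path or a cycle and one more vertex, this leaves the additional vertex at most two neighbours,
which excludes wheels and fans. In a path with a stable set `M` containing `x`, it gives
`M ⊆ {x, y}`, which excludes mountable paths. -/

section CloneIsClean

open SimpleGraph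

universe v

variable {U : Type u} {U' : Type v} {W : SimpleGraph U} {W' : SimpleGraph U'} {x y : U}

/-- Two distinct vertices are *false twins* if they have the same neighbours; in particular they
are not adjacent. -/
structure AreFalseTwins (W : SimpleGraph U) (x y : U) : Prop where
  ne : x ≠ y
  adj_iff (z : U) : W.Adj x z ↔ W.Adj y z

namespace AreFalseTwins

theorem symm (h : AreFalseTwins W x y) : AreFalseTwins W y x :=
  ⟨h.ne.symm, fun z => (h.adj_iff z).symm⟩

theorem not_adj (h : AreFalseTwins W x y) : ¬ W.Adj x y :=
  fun hxy => W.irrefl ((h.adj_iff y).1 hxy)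

theorem neighborSet_eq (h : AreFalseTwins W x y) : W.neighborSet x = W.neighborSet y :=
  Set.ext h.adj_iff

theorem induce {s : Set U} {x y : s} (h : AreFalseTwins W x y) :
    AreFalseTwins (W.induce s) x y :=
  ⟨fun hxy => h.ne (congrArg Subtype.val hxy), fun z => h.adj_iff z⟩

end AreFalseTwins

/-- `W` is a path or a cycle, possibly infinite or empty, encoded as connectedness together with
maximum degree at most 2. -/
structure IsPathOrCycle (W : SimpleGraph U) : Prop where
  preconnected : W.Preconnected
  encard_neighborSet_le (v : U) : (W.neighborSet v).encard ≤ 2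

theorem isPathOrCycle_cycleGraph (n : ℕ) : IsPathOrCycle (cycleGraph n) where
  preconnected := cycleGraph_preconnected
  encard_neighborSet_le v := by
    match n with
    | 0 => exact v.elim0
    | 1 => simp [cycleGraph_one_eq_bot]
    | n + 2 =>
      calc ((cycleGraph (n + 2)).neighborSet v).encard
          = ({v - 1, v + 1} : Set _).encard := by rw [cycleGraph_neighborSet]
        _ ≤ ({v + 1} : Set _).encard + 1 := Set.encard_insert_le _ _
        _ = 2 := by rw [Set.encard_singleton, one_add_one_eq_two]

theorem isPathOrCycle_pathGraph (n : ℕ) : IsPathOrCycle (pathGraph n) where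
  preconnected := pathGraph_preconnected n
  encard_neighborSet_le v :=
    (Set.encard_le_encard fun _ h => pathGraph_le_cycleGraph h).trans
      ((isPathOrCycle_cycleGraph n).encard_neighborSet_le v)

theorem IsPathOrCycle.of_iso (hW' : IsPathOrCycle W') (φ : W ≃g W') : IsPathOrCycle W where
  preconnected := φ.preconnected_iff.2 hW'.preconnected
  encard_neighborSet_le v :=
    (Set.encard_congr (φ.mapNeighborSet v)).trans_le (hW'.encard_neighborSet_le (φ v))

theorem AreFalseTwins.neighborSet_eq_pair (h : AreFalseTwins W x y) (hW : IsPathOrCycle W) {a : U}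
    (ha : W.Adj x a) : W.neighborSet a = {x, y} := by
  have hsub : {x, y} ⊆ W.neighborSet a :=
    Set.pair_subset ha.symm ((h.adj_iff a).1 ha).symm
  refine ((Set.toFinite {x, y}).eq_of_subset_of_encard_le hsub ?_).symm
  rw [Set.encard_pair h.ne]
  exact hW.encard_neighborSet_le a

theorem AreFalseTwins.eq_or_eq_or_adj (h : AreFalseTwins W x y) (hW : IsPathOrCycle W) (z : U) :
    z = x ∨ z = y ∨ W.Adj x z := by
  have hxz := (reachable_iff_reflTransGen x z).1 (hW.preconnected x z)
  induction hxz with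
  | refl => exact Or.inl rfl
  | @tail a b _ hab ih =>
    rcases ih with rfl | rfl | hxa
    · exact Or.inr (Or.inr hab)
    · exact Or.inr (Or.inr ((h.adj_iff b).2 hab))
    · have hb : b ∈ ({x, y} : Set U) := h.neighborSet_eq_pair hW hxa ▸ hab
      exact hb.imp_right Or.inl

theorem encard_neighborSet_induce {s : Set U} {v : s} (h : W.neighborSet v ⊆ s) :
    ((W.induce s).neighborSet v).encard = (W.neighborSet v).encard := by
  rw [neighborSet_induce]
  exact Set.encard_preimage_of_injective_subset_range Subtype.val_injective
    (h.trans_eq Subtype.range_coe.symm)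

theorem IsPathOrCycle.encard_neighborSet_le_of_not_adj {v w : U}
    (hrim : IsPathOrCycle (W.induce {u | u ≠ w})) (hvw : v ≠ w) (hadj : ¬ W.Adj v w) :
    (W.neighborSet v).encard ≤ 2 := by
  have hsub : W.neighborSet v ⊆ {u | u ≠ w} := by
    rintro k hk rfl
    exact hadj hk
  exact (encard_neighborSet_induce (v := ⟨v, hvw⟩) hsub).symm.trans_le
    (hrim.encard_neighborSet_le ⟨v, hvw⟩)

theorem AreFalseTwins.encard_neighborSet_le_two (h : AreFalseTwins W x y) (hW : W.CliqueFree 3)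
    {w : U} (hrim : IsPathOrCycle (W.induce {u | u ≠ w})) : (W.neighborSet w).encard ≤ 2 := by
  by_cases hxw : x = w
  · subst hxw
    rw [h.neighborSet_eq]
    exact hrim.encard_neighborSet_le_of_not_adj h.ne.symm h.symm.not_adj
  by_cases hyw : y = w
  · subst hyw
    rw [← h.neighborSet_eq]
    exact hrim.encard_neighborSet_le_of_not_adj h.ne h.not_adj
  have hdom : ∀ z ∈ W.neighborSet w, z = x ∨ z = y ∨ W.Adj x z := fun z hz => by
    have htwins : AreFalseTwins (W.induce {u | u ≠ w}) ⟨x, hxw⟩ ⟨y, hyw⟩ := induce h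
    simpa using htwins.eq_or_eq_or_adj hrim ⟨z, hz.ne'⟩
  by_cases hadj : W.Adj x w
  · have hsub : W.neighborSet w ⊆ {x, y} := fun z hz =>
      (hdom z hz).imp_right fun hz' => hz'.resolve_right fun hxz =>
        isIndepSet_neighborSet_of_triangleFree W hW x hadj hxz hz.ne hz
    exact (Set.encard_le_encard hsub).trans (Set.encard_pair h.ne).le
  · have hsub : W.neighborSet w ⊆ W.neighborSet x := fun z hz => by
      rcases hdom z hz with rfl | rfl | hxz
      · exact absurd hz.symm hadj
      · exact absurd ((h.adj_iff w).2 hz.symm) hadj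
      · exact hxz
    exact (Set.encard_le_encard hsub).trans
      (hrim.encard_neighborSet_le_of_not_adj hxw hadj)

theorem AreFalseTwins.not_three_le_ncard_neighborSet (h : AreFalseTwins W x y)
    (hW : W.CliqueFree 3) {w : U} (hrim : IsPathOrCycle (W.induce {u | u ≠ w})) :
    ¬ 3 ≤ (W.neighborSet w).ncard :=
  not_le.2 <| Nat.lt_succ_of_le
    (Set.encard_le_coe_iff_finite_ncard_le.1 (h.encard_neighborSet_le_two hW hrim)).2

theorem AreFalseTwins.not_isWheel (h : AreFalseTwins W x y) (hW : W.CliqueFree 3) :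
    ¬ IsWheel W := by
  rintro ⟨w, n, -, ⟨e⟩, hw⟩
  exact h.not_three_le_ncard_neighborSet hW ((isPathOrCycle_cycleGraph n).of_iso e) hw

theorem AreFalseTwins.not_isGuardedFan (h : AreFalseTwins W x y) (hW : W.CliqueFree 3)
    (M : Set U) : ¬ IsGuardedFan W M := by
  rintro ⟨f, n, e, hf, -⟩
  exact h.not_three_le_ncard_neighborSet hW ((isPathOrCycle_pathGraph _).of_iso e) hf

theorem AreFalseTwins.not_isMountablePath (h : AreFalseTwins W x y) {M : Set U} (hx : x ∈ M)
    (hM : ∀ u ∈ M, ∀ v ∈ M, ¬ W.Adj u v) : ¬ IsMountablePath W M := by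
  rintro ⟨⟨n, ⟨e⟩⟩, hcard⟩
  have hsub : M ⊆ {x, y} := fun z hz =>
    (h.eq_or_eq_or_adj ((isPathOrCycle_pathGraph n).of_iso e) z).imp_right fun hz' =>
      hz'.resolve_right (hM x hx z hz)
  have hle : M.ncard ≤ 2 := (Set.ncard_le_ncard hsub).trans_eq (Set.ncard_pair h.ne)
  omega

/-- An isomorphism restricts to an isomorphism between the graphs obtained by deleting a vertex
and its image. -/
def deleteVertexIso (φ : W ≃g W') (w : U) :
    W.induce {u | u ≠ w} ≃g W'.induce {u | u ≠ φ w} :=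
  φ.induce (φ.toEquiv.bijOn fun _ => φ.injective.ne_iff)

theorem ncard_neighborSet_iso (φ : W ≃g W') (w : U) :
    (W'.neighborSet (φ w)).ncard = (W.neighborSet w).ncard :=
  (Set.ncard_congr' (φ.mapNeighborSet w)).symm

theorem IsWheel.map_iso (h : IsWheel W) (φ : W ≃g W') : IsWheel W' := by
  obtain ⟨w, n, hn, ⟨e⟩, hw⟩ := h
  exact ⟨φ w, n, hn, ⟨(deleteVertexIso φ w).symm.trans e⟩, by rwa [ncard_neighborSet_iso]⟩

theorem IsGuardedFan.map_iso {M : Set U} {M' : Set U'} (h : IsGuardedFan W M) (φ : W ≃g W')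
    (hM : Set.MapsTo φ M M') : IsGuardedFan W' M' := by
  obtain ⟨f, n, e, hf, hstart, hend⟩ := h
  exact ⟨φ f, n, (deleteVertexIso φ f).symm.trans e, by rwa [ncard_neighborSet_iso],
    hM hstart, hM hend⟩

theorem IsMountablePath.map_iso {M : Set U} {M' : Set U'} (h : IsMountablePath W M) (φ : W ≃g W')
    (hM : M = φ ⁻¹' M') : IsMountablePath W' M' := by
  subst hM
  obtain ⟨⟨n, ⟨e⟩⟩, hcard⟩ := h
  refine ⟨⟨n, ⟨φ.symm.trans e⟩⟩, ?_⟩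
  rwa [Set.ncard_preimage_of_injective_subset_range φ.injective
    (by simp [φ.surjective.range_eq])] at hcard

theorem cliqueFree_of_hom {n : ℕ} (f : W →g W') (h : W'.CliqueFree n) : W.CliqueFree n := by
  contrapose h
  rw [not_cliqueFree_iff_top_isContained] at h ⊢
  obtain ⟨c⟩ := h
  exact ⟨⟨f.comp c.toHom, Hom.injective_of_top_hom _⟩⟩

variable (G : SimpleGraph U) (t : U)

theorem cloneGraph_eq_comap : cloneGraph G t = G.comap (·.getD t) := by
  ext a b
  rcases a with _ | a <;> rcases b with _ | b <;>
    simp +contextual [cloneGraph, G.adj_comm, G.ne_of_adj]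

theorem areFalseTwins_cloneGraph : AreFalseTwins (cloneGraph G t) none (some t) := by
  rw [cloneGraph_eq_comap]
  exact ⟨(Option.some_ne_none t).symm, fun _ => Iff.rfl⟩

variable {t}

theorem cloneT_eq_preimage {T : Set U} (ht : t ∈ T) : cloneT T = (·.getD t) ⁻¹' T := by
  ext a
  rcases a with _ | a <;> simp [cloneT, ht]

theorem exists_areFalseTwins_or_exists_iso_of_induce_cloneGraph {T : Set U} (ht : t ∈ T)
    (s : Set (Option U)) :
    (∃ x y : s, (x : Option U) ∈ cloneT T ∧ AreFalseTwins ((cloneGraph G t).induce s) x y) ∨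
      ∃ (s' : Set U) (φ : (cloneGraph G t).induce s ≃g G.induce s'),
        ((↑) ⁻¹' cloneT T : Set s) = φ ⁻¹' ((↑) ⁻¹' T) := by
  by_cases hs : none ∈ s ∧ some t ∈ s
  · have htwins := areFalseTwins_cloneGraph G t
    exact Or.inl ⟨⟨none, hs.1⟩, ⟨some t, hs.2⟩, Set.mem_insert none _, htwins.induce⟩
  · have hinj : Set.InjOn (fun a : Option U => a.getD t) s := by
      rintro (_ | a) ha (_ | b) hb hab <;> simp_all
    rw [cloneGraph_eq_comap, cloneT_eq_preimage ht]
    exact Or.inr ⟨_, ⟨Equiv.Set.imageOfInjOn _ s hinj, Iff.rfl⟩, rfl⟩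

end CloneIsClean

/-- **Lemma.** If `(G, T)` is a clean graft and `t ∈ T`, then `clone((G,T),t)` is clean. -/
theorem clone_isCleanGraft {V : Type u} (G : SimpleGraph V) (T : Set V)
    (h : IsCleanGraft G T) (t : V) (ht : t ∈ T) :
    IsCleanGraft (cloneGraph G t) (cloneT T) := by
  obtain ⟨htri, hstable, hwheel, hfan, hpath⟩ := h
  have htri' : (cloneGraph G t).CliqueFree 3 :=
    cloneGraph_eq_comap G t ▸ cliqueFree_of_hom (SimpleGraph.Hom.comap _ G) htri
  have hstable' : ∀ u ∈ cloneT T, ∀ v ∈ cloneT T, ¬ (cloneGraph G t).Adj u v := by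
    rw [cloneT_eq_preimage ht, cloneGraph_eq_comap]
    exact fun u hu v hv => hstable _ hu _ hv
  have htri_induce (s : Set (Option V)) : ((cloneGraph G t).induce s).CliqueFree 3 :=
    cliqueFree_of_hom (SimpleGraph.Embedding.induce s).toHom htri'
  refine ⟨htri', hstable', fun s hs => ?_, fun s hs => ?_, fun s hs => ?_⟩ <;>
    obtain ⟨x, y, hx, htwins⟩ | ⟨s', φ, hφ⟩ :=
      exists_areFalseTwins_or_exists_iso_of_induce_cloneGraph G ht s
  · exact htwins.not_isWheel (htri_induce s) hs
  · exact hwheel s' (hs.map_iso φ)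
  · exact htwins.not_isGuardedFan (htri_induce s) _ hs
  · exact hfan s' (hs.map_iso φ hφ.subset)
  · exact htwins.not_isMountablePath hx (fun u hu v hv => hstable' u hu v hv) hs
  · exact hpath s' (hs.map_iso φ hφ)
end
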